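/- arXiv:2203.08375 — 6 statements merged into one kernel-verified Lean document; each statement's English description precedes it below -/
import Mathlib

section
/- Let (u,p) be a solution of the steady incompressible Euler system with slip boundary condition in the nozzle Ω. Suppose ∫_{h₀(x₁)}^{h₁(x₁)} u₁(x₁,x₂)dx₂ = Q for all x₁∈ℝ, u₁(x₁,x₂)>0 for all (x₁,x₂)∈Ω, and u₁(x₁,x₂)→6Qx₂(1−x₂) as x₁→−∞ uniformly for x₂∈[0,1]. Then the stream function ψ(x₁,x₂):=∫_{h₀(x₁)}^{x₂} u₁(x₁,s)ds satisfies 0<ψ(x)<Q for all x∈Ω and solves the semilinear equation Δψ(x)=f(ψ(x)) for all x∈Ω, where Δψ=∂²ψ/∂x₁²+∂²ψ/∂x₂². -/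
open Real Set MeasureTheory

noncomputable section

/-- Partial derivative in the `x₁` direction. -/
def pd1 (φ : ℝ × ℝ → ℝ) (x : ℝ × ℝ) : ℝ := fderiv ℝ φ x (1, 0)

/-- Partial derivative in the `x₂` direction. -/
def pd2 (φ : ℝ × ℝ → ℝ) (x : ℝ × ℝ) : ℝ := fderiv ℝ φ x (0, 1)

/-- The Laplacian `Δφ = ∂²φ/∂x₁² + ∂²φ/∂x₂²`. -/
def lap (φ : ℝ × ℝ → ℝ) (x : ℝ × ℝ) : ℝ := pd1 (pd1 φ) x + pd2 (pd2 φ) x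

/-- `(u, p)` is a solution of the steady incompressible Euler system in the nozzle `Ω`
with slip boundary condition. -/
def IsEulerSlip (h₀ h₁ : ℝ → ℝ) (Ω : Set (ℝ × ℝ)) (u : ℝ × ℝ → ℝ × ℝ)
    (p : ℝ × ℝ → ℝ) : Prop :=
  ContDiffOn ℝ 2 u Ω ∧ (∃ K, LipschitzOnWith K u (closure Ω)) ∧ ContDiffOn ℝ 1 p Ω ∧
  (∀ x ∈ Ω,
    (u x).1 * pd1 (fun y => (u y).1) x + (u x).2 * pd2 (fun y => (u y).1) x + pd1 p x = 0 ∧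
    (u x).1 * pd1 (fun y => (u y).2) x + (u x).2 * pd2 (fun y => (u y).2) x + pd2 p x = 0 ∧
    pd1 (fun y => (u y).1) x + pd2 (fun y => (u y).2) x = 0) ∧
  (∀ x₁ : ℝ, (u (x₁, h₀ x₁)).2 = deriv h₀ x₁ * (u (x₁, h₀ x₁)).1 ∧
             (u (x₁, h₁ x₁)).2 = deriv h₁ x₁ * (u (x₁, h₁ x₁)).1)

/-!
The Bernoulli head `B = p + |u|²/2` satisfies `dB = -ω dψ`, where `ω` is the vorticity and
`dψ = u₁ dx₂ - u₂ dx₁`. Since `u₁ > 0`, the pair `(x₁, ψ)` is a global coordinate system on the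
nozzle; in these coordinates `∂B/∂x₁ = 0` on every full line `ψ = s`, so `B`, and with it
`-ω = Δψ`, is a function of `ψ` alone: `Δψ = F(ψ)` with `F` continuous on `(0, Q)`.

The far upstream flow identifies `F`. For `a < b` inside the flat part of the channel,
`A(x) = ∫_a^b u₂(x, y) dy` is bounded, as `u₂` is Lipschitz and vanishes on the flat wall, and
`A'(x) = ∫_a^b ω(x, y) dy + u₁(x, b) - u₁(x, a)` converges as `x → -∞`, necessarily to `0`. With
`U` the upstream profile and `φ(t) = ∫_c^t U` this reads `U(b) - U(a) = ∫_a^b F(φ(y)) dy`, that is,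
`U' = F ∘ φ`. For the Poiseuille profile, `F = f`.
-/

open Filter Topology

/-- The vorticity `∂₁u₂ - ∂₂u₁` of the planar velocity field `(u₁, u₂)`. -/
def vorticity (u₁ u₂ : ℝ × ℝ → ℝ) (z : ℝ × ℝ) : ℝ := pd1 u₂ z - pd2 u₁ z

/-- The flux form `u₁ dx₂ - u₂ dx₁` of the planar velocity field `(u₁, u₂)`, which is the
differential of its stream function. -/
def fluxForm (u₁ u₂ : ℝ × ℝ → ℝ) (z : ℝ × ℝ) : ℝ × ℝ →L[ℝ] ℝ :=
  u₁ z • ContinuousLinearMap.snd ℝ ℝ ℝ - u₂ z • ContinuousLinearMap.fst ℝ ℝ ℝ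

/-- The stream function `ψ` of a velocity field with horizontal component `u₁`, normalized to
vanish on the graph of `h`. -/
def streamFunction (h : ℝ → ℝ) (u₁ : ℝ × ℝ → ℝ) (z : ℝ × ℝ) : ℝ :=
  ∫ s in h z.1..z.2, u₁ (z.1, s)

/-- The open region between the lower wall `x₂ = h₀(x₁)` and the upper wall `x₂ = h₁(x₁)`. -/
def nozzle (h₀ h₁ : ℝ → ℝ) : Set (ℝ × ℝ) := {x : ℝ × ℝ | h₀ x.1 < x.2 ∧ x.2 < h₁ x.1}

section PartialDerivatives

variable {g : ℝ × ℝ → ℝ} {S : Set (ℝ × ℝ)}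

lemma hasDerivAt_pd1 {x y : ℝ} (hg : DifferentiableAt ℝ g (x, y)) :
    HasDerivAt (fun t => g (t, y)) (pd1 g (x, y)) x :=
  hg.hasFDerivAt.comp_hasDerivAt (f := fun t : ℝ => (t, y)) x
    ((hasDerivAt_id x).prodMk (hasDerivAt_const x y))

lemma hasDerivAt_pd2 {x y : ℝ} (hg : DifferentiableAt ℝ g (x, y)) :
    HasDerivAt (fun t => g (x, t)) (pd2 g (x, y)) y :=
  hg.hasFDerivAt.comp_hasDerivAt (f := fun t : ℝ => (x, t)) y
    ((hasDerivAt_const y x).prodMk (hasDerivAt_id y))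

lemma continuousOn_pd1 (hS : IsOpen S) (hg : ContDiffOn ℝ 1 g S) : ContinuousOn (pd1 g) S :=
  (hg.continuousOn_fderiv_of_isOpen hS le_rfl).clm_apply continuousOn_const

lemma continuousOn_pd2 (hS : IsOpen S) (hg : ContDiffOn ℝ 1 g S) : ContinuousOn (pd2 g) S :=
  (hg.continuousOn_fderiv_of_isOpen hS le_rfl).clm_apply continuousOn_const

lemma continuousOn_vorticity {u₁ u₂ : ℝ × ℝ → ℝ} (hS : IsOpen S) (hu₁ : ContDiffOn ℝ 1 u₁ S)
    (hu₂ : ContDiffOn ℝ 1 u₂ S) : ContinuousOn (vorticity u₁ u₂) S :=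
  (continuousOn_pd1 hS hu₂).sub (continuousOn_pd2 hS hu₁)

lemma abs_vorticity_le_of_lipschitzOnWith {u₁ u₂ : ℝ × ℝ → ℝ} {K₁ K₂ : NNReal} {z : ℝ × ℝ}
    (hS : S ∈ 𝓝 z) (hu₁ : LipschitzOnWith K₁ u₁ S) (hu₂ : LipschitzOnWith K₂ u₂ S) :
    |vorticity u₁ u₂ z| ≤ K₂ + K₁ := by
  have apply_le {g : ℝ × ℝ → ℝ} {K : NNReal} (hg : LipschitzOnWith K g S) {e : ℝ × ℝ}
      (he : ‖e‖ = 1) : |fderiv ℝ g z e| ≤ K := by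
    simpa [he] using
      (fderiv ℝ g z).le_of_opNorm_le (norm_fderiv_le_of_lipschitzOn ℝ hS hg) e
  exact (abs_sub _ _).trans <|
    add_le_add (apply_le hu₂ (by simp [Prod.norm_def])) (apply_le hu₁ (by simp [Prod.norm_def]))

lemma lap_eq_neg_vorticity {ψ u₁ u₂ : ℝ × ℝ → ℝ} {z : ℝ × ℝ}
    (hψ : ∀ᶠ y in 𝓝 z, HasFDerivAt ψ (fluxForm u₁ u₂ y) y) :
    lap ψ z = -vorticity u₁ u₂ z := by
  have h1 : pd1 ψ =ᶠ[𝓝 z] fun y => -u₂ y :=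
    hψ.mono fun y hy => by simp [pd1, fluxForm, hy.fderiv]
  have h2 : pd2 ψ =ᶠ[𝓝 z] u₁ := hψ.mono fun y hy => by simp [pd2, fluxForm, hy.fderiv]
  rw [lap, vorticity, pd1, pd2, h1.fderiv_eq, h2.fderiv_eq, fderiv_fun_neg]
  simp only [pd1, pd2, neg_apply]
  ring

lemma hasFDerivAt_bernoulli {u₁ u₂ p : ℝ × ℝ → ℝ} {z : ℝ × ℝ}
    (h1 : DifferentiableAt ℝ u₁ z) (h2 : DifferentiableAt ℝ u₂ z) (hp : DifferentiableAt ℝ p z)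
    (he1 : u₁ z * pd1 u₁ z + u₂ z * pd2 u₁ z + pd1 p z = 0)
    (he2 : u₁ z * pd1 u₂ z + u₂ z * pd2 u₂ z + pd2 p z = 0) :
    HasFDerivAt (fun y => p y + 1 / 2 * (u₁ y ^ 2 + u₂ y ^ 2))
      (-vorticity u₁ u₂ z • fluxForm u₁ u₂ z) z := by
  refine (hp.hasFDerivAt.add (((h1.hasFDerivAt.pow 2).add
    (h2.hasFDerivAt.pow 2)).const_mul (1 / 2))).congr_fderiv ?_
  simp only [pd1, pd2] at he1 he2
  refine ContinuousLinearMap.prod_ext (ContinuousLinearMap.ext_ring ?_)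
    (ContinuousLinearMap.ext_ring ?_)
  all_goals simp only [vorticity, fluxForm, pd1, pd2, ContinuousLinearMap.comp_apply,
    ContinuousLinearMap.inl_apply, ContinuousLinearMap.inr_apply, add_apply, sub_apply, smul_apply,
    ContinuousLinearMap.coe_fst', ContinuousLinearMap.coe_snd', smul_eq_mul, nsmul_eq_mul,
    Nat.add_one_sub_one, Nat.cast_ofNat, pow_one]
  · linear_combination he1
  · linear_combination he2

end PartialDerivatives

section ParametricIntegral

variable {g : ℝ × ℝ → ℝ} {a b x₀ : ℝ}

lemma intervalIntegrable_and_hasDerivAt_integral_pd1 {K : NNReal} {V : Set ℝ} (hV : V ∈ 𝓝 x₀)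
    (hab : a ≤ b) (hg : LipschitzOnWith K g (V ×ˢ Icc a b))
    (hd : ∀ s ∈ Ioo a b, DifferentiableAt ℝ g (x₀, s)) :
    IntervalIntegrable (fun s => pd1 g (x₀, s)) volume a b ∧
      HasDerivAt (fun x => ∫ s in a..b, g (x, s)) (∫ s in a..b, pd1 g (x₀, s)) x₀ := by
  have hcont : ∀ x ∈ V, ContinuousOn (fun s => g (x, s)) (Icc a b) := fun x hx =>
    hg.continuousOn.comp (by fun_prop) fun s hs => ⟨hx, hs⟩
  have hsub : uIoc a b ⊆ Icc a b := uIoc_of_le hab ▸ Ioc_subset_Icc_self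
  refine intervalIntegral.hasDerivAt_integral_of_dominated_loc_of_lip (bound := fun _ => (K : ℝ))
    hV ?_ ((hcont x₀ (mem_of_mem_nhds hV)).intervalIntegrable_of_Icc hab) ?_ ?_ (by simp) ?_
  · filter_upwards [hV] with x hx
    exact ((hcont x hx).mono hsub).aestronglyMeasurable measurableSet_uIoc
  · exact ((measurable_fderiv_apply_const ℝ g (1, 0)).comp
      (by fun_prop : Measurable fun s : ℝ => (x₀, s))).aestronglyMeasurable
  · refine Eventually.of_forall fun s hs => LipschitzOnWith.of_dist_le_mul fun x hx y hy => ?_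
    simpa [Prod.dist_eq] using hg.dist_le_mul (x, s) ⟨hx, hsub hs⟩ (y, s) ⟨hy, hsub hs⟩
  · filter_upwards [Measure.ae_ne volume b] with s hsb hs
    rw [uIoc_of_le hab] at hs
    exact hasDerivAt_pd1 (hd s ⟨hs.1, lt_of_le_of_ne hs.2 hsb⟩)

lemma hasDerivAt_integral_variable_endpoint (hg : Continuous g) {h : ℝ → ℝ} {h' : ℝ}
    (hh : HasDerivAt h h' x₀) :
    HasDerivAt (fun x => ∫ s in h x₀..h x, g (x, s)) (h' * g (x₀, h x₀)) x₀ := by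
  have hint (x : ℝ) : IntervalIntegrable (fun s => g (x, s)) volume (h x₀) (h x) :=
    (by fun_prop : Continuous fun s => g (x, s)).intervalIntegrable _ _
  have herr : (fun x => ∫ s in h x₀..h x, (g (x, s) - g (x₀, h x₀))) =o[𝓝 x₀]
      fun x => x - x₀ := by
    refine Asymptotics.IsLittleO.trans_isBigO ?_ hh.isBigO_sub
    refine Asymptotics.isLittleO_iff.2 fun ε hε => ?_
    obtain ⟨δ, hδ, hgδ⟩ := Metric.continuousAt_iff.1 (hg.continuousAt (x := (x₀, h x₀))) ε hε
    filter_upwards [Metric.ball_mem_nhds x₀ hδ,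
      hh.continuousAt (Metric.ball_mem_nhds (h x₀) hδ)] with x hx hhx
    refine intervalIntegral.norm_integral_le_of_norm_le_const fun s hs => ?_
    have hs' : dist s (h x₀) < δ :=
      (abs_sub_left_of_mem_uIcc (uIoc_subset_uIcc hs)).trans_lt (by simpa [Real.dist_eq] using hhx)
    exact (hgδ (x := (x, s)) (max_lt hx hs')).le
  have hlin : HasDerivAt (fun x => (h x - h x₀) * g (x₀, h x₀)) (h' * g (x₀, h x₀)) x₀ :=
    (hh.sub_const _).mul_const _
  have hzero : HasDerivAt (fun x => ∫ s in h x₀..h x, (g (x, s) - g (x₀, h x₀))) 0 x₀ := by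
    rw [hasDerivAt_iff_isLittleO]
    simpa using herr
  refine ((hlin.add hzero).congr_deriv (add_zero _)).congr_of_eventuallyEq
    (Eventually.of_forall fun x => ?_)
  rw [Pi.add_apply, intervalIntegral.integral_sub (hint x) intervalIntegrable_const,
    intervalIntegral.integral_const, smul_eq_mul, add_sub_cancel]

end ParametricIntegral

section IntervalCalculus

lemma continuousOn_integral_Icc {g : ℝ → ℝ} {a b : ℝ} (hab : a ≤ b)
    (hg : ContinuousOn g (Icc a b)) :
    ContinuousOn (fun y => ∫ s in a..y, g s) (Icc a b) := by
  rw [← uIcc_of_le hab] at hg ⊢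
  exact intervalIntegral.continuousOn_primitive_interval (hg.integrableOn_compact isCompact_uIcc)

lemma bijOn_integral_of_pos {g : ℝ → ℝ} {a b : ℝ} (hab : a ≤ b) (hg : ContinuousOn g (Icc a b))
    (hpos : ∀ s ∈ Ioo a b, 0 < g s) :
    BijOn (fun y => ∫ s in a..y, g s) (Ioo a b) (Ioo 0 (∫ s in a..b, g s)) := by
  have hint {x y : ℝ} (hx : x ∈ Icc a b) (hy : y ∈ Icc a b) : IntervalIntegrable g volume x y :=
    (hg.mono (ordConnected_Icc.uIcc_subset hx hy)).intervalIntegrable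
  have ha : a ∈ Icc a b := left_mem_Icc.2 hab
  have hmono : StrictMonoOn (fun y => ∫ s in a..y, g s) (Icc a b) := fun x hx y hy hxy => by
    have hxy_pos : 0 < ∫ s in x..y, g s :=
      intervalIntegral.intervalIntegral_pos_of_pos_on (hint hx hy)
        (fun s hs => hpos s ⟨hx.1.trans_lt hs.1, hs.2.trans_le hy.2⟩) hxy
    have hadd := intervalIntegral.integral_add_adjacent_intervals (hint ha hx) (hint hx hy)
    simp only
    linarith
  simpa [(continuousOn_integral_Icc hab hg).image_Ioo_of_strictMonoOn hab hmono] using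
    (hmono.injOn.mono Ioo_subset_Icc_self).bijOn_image

lemma hasDerivAt_of_sub_eq_integral {U G : ℝ → ℝ} {J : Set ℝ} {t : ℝ} (hJ : IsOpen J)
    (hG : ContinuousOn G J) (hU : ∀ a ∈ J, ∀ b ∈ J, a ≤ b → U b - U a = ∫ y in a..b, G y)
    (ht : t ∈ J) : HasDerivAt U (G t) t := by
  have hprim : HasDerivAt (fun y => U t + ∫ s in t..y, G s) (G t) t :=
    (intervalIntegral.integral_hasDerivAt_right (by simp)
      (hG.stronglyMeasurableAtFilter hJ t ht) (hG.continuousAt (hJ.mem_nhds ht))).const_add _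
  refine hprim.congr_of_eventuallyEq ?_
  filter_upwards [hJ.mem_nhds ht] with y hy
  rcases le_total t y with hty | hyt
  · rw [← hU t ht y hy hty, add_sub_cancel]
  · rw [intervalIntegral.integral_symm, ← hU y hy t ht hyt]
    ring

lemma eq_zero_of_tendsto_deriv_atBot {E : Type*} [NormedAddCommGroup E] [NormedSpace ℝ E]
    {A A' : ℝ → E} {c : E} {C : ℝ} (hA : ∀ᶠ x in atBot, HasDerivAt A (A' x) x)
    (hC : ∀ᶠ x in atBot, ‖A x‖ ≤ C) (hlim : Tendsto A' atBot (𝓝 c)) : c = 0 := by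
  by_contra hc
  have hcpos : 0 < ‖c‖ := norm_pos_iff.2 hc
  have hclose : ∀ᶠ x in atBot, ‖A' x - c‖ ≤ ‖c‖ / 2 :=
    ((tendsto_iff_norm_sub_tendsto_zero.1 hlim).eventually_lt_const (half_pos hcpos)).mono
      fun _ => le_of_lt
  obtain ⟨L, hL⟩ := eventually_atBot.1 (hA.and (hC.and hclose))
  have hC0 : 0 ≤ C := (norm_nonneg _).trans (hL L le_rfl).2.1
  set N : ℝ := (4 * C + 2) / ‖c‖
  have hNpos : 0 < N := by positivity
  have hN : N * ‖c‖ = 4 * C + 2 := div_mul_cancel₀ _ hcpos.ne'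
  have hLN : L - N ≤ L := by linarith
  have hmvt : ‖(A L - L • c) - (A (L - N) - (L - N) • c)‖ ≤ ‖c‖ / 2 * ‖L - (L - N)‖ :=
    Convex.norm_image_sub_le_of_norm_hasDerivWithin_le (f := fun x => A x - x • c)
      (f' := fun x => A' x - c) (s := Iic L)
      (fun x hx => ((hL x hx).1.sub
        (by simpa using (hasDerivAt_id x).smul_const c)).hasDerivWithinAt)
      (fun x hx => (hL x hx).2.2) (convex_Iic L) hLN (mem_Iic.2 le_rfl)
  have hNc : N • c = (A L - A (L - N)) - ((A L - L • c) - (A (L - N) - (L - N) • c)) := by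
    module
  have hle : N * ‖c‖ ≤ (C + C) + ‖c‖ / 2 * N := by
    calc N * ‖c‖ = ‖N • c‖ := by rw [norm_smul, Real.norm_of_nonneg hNpos.le]
      _ ≤ ‖A L - A (L - N)‖ + ‖(A L - L • c) - (A (L - N) - (L - N) • c)‖ :=
        hNc ▸ norm_sub_le _ _
      _ ≤ (C + C) + ‖c‖ / 2 * N := by
        refine add_le_add ((norm_sub_le _ _).trans
          (add_le_add (hL L le_rfl).2.1 (hL _ hLN).2.1)) (hmvt.trans_eq ?_)
        rw [sub_sub_cancel, Real.norm_of_nonneg hNpos.le]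
  linarith

end IntervalCalculus

section FiberwiseCoordinates

variable {Ω : Set (ℝ × ℝ)} {I : Set ℝ} {ψ B W : ℝ × ℝ → ℝ}

lemma exists_continuousLinearEquiv_eq_fst_prod {L : ℝ × ℝ →L[ℝ] ℝ} (hL : L (0, 1) ≠ 0) :
    ∃ e : (ℝ × ℝ) ≃L[ℝ] ℝ × ℝ,
      (e : ℝ × ℝ →L[ℝ] ℝ × ℝ) = (ContinuousLinearMap.fst ℝ ℝ ℝ).prod L := by
  have hdecomp (q : ℝ × ℝ) : L q = q.1 * L (1, 0) + q.2 * L (0, 1) := by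
    rw [← smul_eq_mul, ← smul_eq_mul, ← map_smul, ← map_smul, ← map_add]
    simp
  refine ⟨ContinuousLinearEquiv.equivOfInverse ((ContinuousLinearMap.fst ℝ ℝ ℝ).prod L)
    ((ContinuousLinearMap.fst ℝ ℝ ℝ).prod ((L (0, 1))⁻¹ • (ContinuousLinearMap.snd ℝ ℝ ℝ -
      L (1, 0) • ContinuousLinearMap.fst ℝ ℝ ℝ))) (fun q => ?_) (fun q => ?_), rfl⟩
  · ext
    · simp
    · change (L (0, 1))⁻¹ * (L q - L (1, 0) * q.1) = q.2
      rw [hdecomp q]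
      field_simp
      ring
  · ext
    · simp
    · change L (q.1, (L (0, 1))⁻¹ * (q.2 - L (1, 0) * q.1)) = q.2
      rw [hdecomp]
      field_simp
      ring

lemma bijOn_fst_prodMk (hψ : ∀ x, BijOn (fun y => ψ (x, y)) {y | (x, y) ∈ Ω} I) :
    BijOn (fun z : ℝ × ℝ => (z.1, ψ z)) Ω (univ ×ˢ I) := by
  refine ⟨fun z hz => ⟨mem_univ _, (hψ z.1).mapsTo hz⟩, ?_, ?_⟩
  · rintro ⟨x, y⟩ hz ⟨x', y'⟩ hz' heq
    obtain ⟨rfl, hy⟩ := Prod.mk.inj heq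
    exact Prod.ext rfl ((hψ x).injOn hz hz' hy)
  · rintro ⟨x, s⟩ ⟨-, hs⟩
    obtain ⟨y, hy, rfl⟩ := (hψ x).surjOn hs
    exact ⟨(x, y), hy, rfl⟩

lemma exists_hasFDerivAt_of_leftInverse {G : ℝ × ℝ → ℝ × ℝ} {z : ℝ × ℝ} {L : ℝ × ℝ →L[ℝ] ℝ}
    (hψ : HasStrictFDerivAt ψ L z) (hL : L (0, 1) ≠ 0) (hG : ∀ᶠ y in 𝓝 z, G (y.1, ψ y) = y) :
    ∃ G' : ℝ × ℝ →L[ℝ] ℝ × ℝ,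
      HasFDerivAt G G' (z.1, ψ z) ∧ L.comp G' = ContinuousLinearMap.snd ℝ ℝ ℝ := by
  obtain ⟨e, he⟩ := exists_continuousLinearEquiv_eq_fst_prod hL
  have hchart : HasStrictFDerivAt (fun y : ℝ × ℝ => (y.1, ψ y)) (e : ℝ × ℝ →L[ℝ] ℝ × ℝ) z :=
    he ▸ hasStrictFDerivAt_fst.prodMk hψ
  refine ⟨e.symm, (hchart.to_local_left_inverse hG).hasFDerivAt,
    ContinuousLinearMap.ext fun q => ?_⟩
  have hq : e (e.symm q) = ((e.symm q).1, L (e.symm q)) := DFunLike.congr_fun he _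
  exact (congrArg Prod.snd hq).symm.trans (congrArg Prod.snd (e.apply_symm_apply q))

lemma eq_of_hasFDerivAt_smul_snd {H w : ℝ × ℝ → ℝ} (hI : IsOpen I)
    (hH : ∀ q ∈ univ ×ˢ I, HasFDerivAt H (w q • ContinuousLinearMap.snd ℝ ℝ ℝ) q)
    {s : ℝ} (hs : s ∈ I) (x x' : ℝ) : w (x, s) = w (x', s) := by
  have hfst (x : ℝ) {s : ℝ} (hs : s ∈ I) : HasDerivAt (fun x => H (x, s)) 0 x := by
    have hq := hH (x, s) ⟨mem_univ _, hs⟩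
    simpa [pd1, hq.fderiv] using hasDerivAt_pd1 hq.differentiableAt
  have hsnd (x : ℝ) : HasDerivAt (fun s => H (x, s)) (w (x, s)) s := by
    have hq := hH (x, s) ⟨mem_univ _, hs⟩
    simpa [pd2, hq.fderiv] using hasDerivAt_pd2 hq.differentiableAt
  have hconst {s : ℝ} (hs : s ∈ I) : H (x, s) = H (x', s) :=
    is_const_of_deriv_eq_zero (fun x => (hfst x hs).differentiableAt)
      (fun x => (hfst x hs).deriv) x x'
  exact (hsnd x).unique ((hsnd x').congr_of_eventuallyEq
    ((hI.eventually_mem hs).mono fun _ => hconst))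

lemma exists_continuousOn_comp_of_hasFDerivAt_smul {ψ' : ℝ × ℝ → ℝ × ℝ →L[ℝ] ℝ} (hΩ : IsOpen Ω)
    (hI : IsOpen I) (hψ : ∀ z ∈ Ω, HasStrictFDerivAt ψ (ψ' z) z)
    (hψ' : ∀ z ∈ Ω, ψ' z (0, 1) ≠ 0) (hbij : ∀ x, BijOn (fun y => ψ (x, y)) {y | (x, y) ∈ Ω} I)
    (hB : ∀ z ∈ Ω, HasFDerivAt B (W z • ψ' z) z) (hW : ContinuousOn W Ω) :
    ∃ F : ℝ → ℝ, ContinuousOn F I ∧ ∀ z ∈ Ω, W z = F (ψ z) := by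
  have hchart := bijOn_fst_prodMk hbij
  set G := Function.invFunOn (fun z : ℝ × ℝ => (z.1, ψ z)) Ω
  have hG : ∀ z ∈ Ω, G (z.1, ψ z) = z := hchart.invOn_invFunOn.1
  have hderiv : ∀ q ∈ univ ×ˢ I, ContinuousAt (fun q => W (G q)) q ∧
      HasFDerivAt (fun q => B (G q)) (W (G q) • ContinuousLinearMap.snd ℝ ℝ ℝ) q := by
    intro q hq
    obtain ⟨z, hz, rfl⟩ := hchart.surjOn hq
    obtain ⟨G', hG', hcomp⟩ := exists_hasFDerivAt_of_leftInverse (hψ z hz) (hψ' z hz)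
      ((hΩ.eventually_mem hz).mono hG)
    have hz_eq : G (z.1, ψ z) = z := hG z hz
    constructor
    · exact ContinuousAt.comp (by rw [hz_eq]; exact hW.continuousAt (hΩ.mem_nhds hz))
        hG'.continuousAt
    · have hBz : HasFDerivAt B (W z • ψ' z) (G (z.1, ψ z)) := hz_eq.symm ▸ hB z hz
      refine (hBz.comp (z.1, ψ z) hG').congr_fderiv ?_
      rw [ContinuousLinearMap.smul_comp, hcomp, hz_eq]
  refine ⟨fun s => W (G (0, s)), fun s hs => ?_, fun z hz => ?_⟩
  · exact ((hderiv (0, s) ⟨mem_univ _, hs⟩).1.comp (f := fun s : ℝ => ((0 : ℝ), s))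
      (by fun_prop)).continuousWithinAt
  · have hψz : ψ z ∈ I := (hbij z.1).mapsTo hz
    calc W z = W (G (z.1, ψ z)) := by rw [hG z hz]
      _ = W (G (0, ψ z)) := eq_of_hasFDerivAt_smul_snd hI (fun q hq => (hderiv q hq).2) hψz _ _

end FiberwiseCoordinates

section StreamFunction

variable {h h₀ h₁ : ℝ → ℝ} {u₁ u₂ : ℝ × ℝ → ℝ} {K : NNReal} {z : ℝ × ℝ}

lemma isOpen_nozzle (hh₀ : Continuous h₀) (hh₁ : Continuous h₁) : IsOpen (nozzle h₀ h₁) :=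
  (isOpen_lt (hh₀.comp continuous_fst) continuous_snd).inter
    (isOpen_lt continuous_snd (hh₁.comp continuous_fst))

lemma mk_mem_closure_nozzle {x y : ℝ} (hlt : h₀ x < h₁ x) (hy : y ∈ Icc (h₀ x) (h₁ x)) :
    (x, y) ∈ closure (nozzle h₀ h₁) := by
  rw [← closure_Ioo hlt.ne] at hy
  have hmaps : MapsTo (fun y : ℝ => (x, y)) (Ioo (h₀ x) (h₁ x)) (nozzle h₀ h₁) := fun _ => id
  exact hmaps.closure (by fun_prop) hy

lemma hasDerivAt_streamFunction_fst {h' x₀ y : ℝ} (hu₁ : LipschitzWith K u₁)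
    (hy : h x₀ ≤ y) (hh : HasDerivAt h h' x₀)
    (hd₁ : ∀ s ∈ Ioo (h x₀) y, DifferentiableAt ℝ u₁ (x₀, s))
    (hd₂ : ∀ s ∈ Ioo (h x₀) y, DifferentiableAt ℝ u₂ (x₀, s))
    (hc₂ : ContinuousOn (fun s => u₂ (x₀, s)) (Icc (h x₀) y))
    (hdiv : ∀ s ∈ Ioo (h x₀) y, pd1 u₁ (x₀, s) + pd2 u₂ (x₀, s) = 0)
    (hslip : u₂ (x₀, h x₀) = h' * u₁ (x₀, h x₀)) :
    HasDerivAt (fun x => streamFunction h u₁ (x, y)) (-u₂ (x₀, y)) x₀ := by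
  obtain ⟨hint, hfixed⟩ := intervalIntegrable_and_hasDerivAt_integral_pd1 univ_mem hy
    (hu₁.lipschitzOnWith (s := univ ×ˢ Icc (h x₀) y)) hd₁
  have hendpoint := hasDerivAt_integral_variable_endpoint hu₁.continuous hh
  have hgauss : ∫ s in h x₀..y, -pd1 u₁ (x₀, s) = u₂ (x₀, y) - u₂ (x₀, h x₀) :=
    intervalIntegral.integral_eq_sub_of_hasDerivAt_of_le (f := fun s => u₂ (x₀, s)) hy hc₂
      (fun s hs => (hasDerivAt_pd2 (hd₂ s hs)).congr_deriv (by linarith [hdiv s hs])) hint.neg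
  rw [intervalIntegral.integral_neg] at hgauss
  refine ((hfixed.sub hendpoint).congr_deriv (by linarith)).congr_of_eventuallyEq
    (Eventually.of_forall fun x => ?_)
  have hcont : Continuous fun s => u₁ (x, s) := hu₁.continuous.comp (by fun_prop)
  exact (intervalIntegral.integral_interval_sub_left (hcont.intervalIntegrable _ _)
    (hcont.intervalIntegrable _ _)).symm

lemma hasStrictFDerivAt_fluxForm {φ : ℝ × ℝ → ℝ}
    (hφ₁ : ∀ᶠ w in 𝓝 z, HasDerivAt (fun x => φ (x, w.2)) (-u₂ w) w.1)
    (hφ₂ : ∀ᶠ w in 𝓝 z, HasDerivAt (fun y => φ (w.1, y)) (u₁ w) w.2)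
    (hu₁ : ContinuousAt u₁ z) (hu₂ : ContinuousAt u₂ z) :
    HasStrictFDerivAt φ (fluxForm u₁ u₂ z) z := by
  have hspan : Continuous (ContinuousLinearMap.toSpanSingleton ℝ : ℝ → ℝ →L[ℝ] ℝ) :=
    (ContinuousLinearMap.toSpanSingletonCLE (𝕜 := ℝ) (E := ℝ)).continuous
  have hφ := hasStrictFDerivAt_uncurry_coprod (𝕜 := ℝ) (u := z) (f := fun x y => φ (x, y))
    (f₁ := fun x y => ContinuousLinearMap.toSpanSingleton ℝ (-u₂ (x, y)))
    (f₂ := fun x y => ContinuousLinearMap.toSpanSingleton ℝ (u₁ (x, y)))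
    (hφ₁.mono fun _ => HasDerivAt.hasFDerivAt) (hφ₂.mono fun _ => HasDerivAt.hasFDerivAt)
    (hspan.continuousAt.comp hu₂.neg) (hspan.continuousAt.comp hu₁)
  exact hφ.congr_fderiv (by ext <;> simp [fluxForm, Function.HasUncurry.uncurry])

lemma hasStrictFDerivAt_streamFunction (hlt : ∀ x, h₀ x < h₁ x) (hh₀ : Differentiable ℝ h₀)
    (hh₁ : Continuous h₁) (hu₁ : LipschitzOnWith K u₁ (closure (nozzle h₀ h₁)))
    (hc₂ : ContinuousOn u₂ (closure (nozzle h₀ h₁)))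
    (hd₁ : ∀ w ∈ nozzle h₀ h₁, DifferentiableAt ℝ u₁ w)
    (hd₂ : ∀ w ∈ nozzle h₀ h₁, DifferentiableAt ℝ u₂ w)
    (hdiv : ∀ w ∈ nozzle h₀ h₁, pd1 u₁ w + pd2 u₂ w = 0)
    (hslip : ∀ x, u₂ (x, h₀ x) = deriv h₀ x * u₁ (x, h₀ x)) (hz : z ∈ nozzle h₀ h₁) :
    HasStrictFDerivAt (streamFunction h₀ u₁) (fluxForm u₁ u₂ z) z := by
  -- Moving the lower wall exposes values of `u₁` outside the nozzle, hence the extension.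
  obtain ⟨U, hU, hUu⟩ := hu₁.extend_real
  have hopen := isOpen_nozzle hh₀.continuous hh₁
  have hev := hopen.eventually_mem hz
  have hUev {w : ℝ × ℝ} (hw : w ∈ nozzle h₀ h₁) : u₁ =ᶠ[𝓝 w] U :=
    (hopen.eventually_mem hw).mono fun _ hw' => hUu (subset_closure hw')
  have hψU : streamFunction h₀ u₁ =ᶠ[𝓝 z] streamFunction h₀ U := hev.mono fun w hw =>
    intervalIntegral.integral_congr fun s hs => by
      rw [uIcc_of_le hw.1.le] at hs
      exact hUu (mk_mem_closure_nozzle (hlt w.1) ⟨hs.1, hs.2.trans hw.2.le⟩)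
  have hψ : HasStrictFDerivAt (streamFunction h₀ U) (fluxForm U u₂ z) z := by
    refine hasStrictFDerivAt_fluxForm (hev.mono fun w hw => ?_) (Eventually.of_forall fun w => ?_)
      hU.continuous.continuousAt (hd₂ z hz).continuousAt
    · have hmem {s : ℝ} (hs : s ∈ Ioo (h₀ w.1) w.2) : (w.1, s) ∈ nozzle h₀ h₁ :=
        ⟨hs.1, hs.2.trans hw.2⟩
      refine hasDerivAt_streamFunction_fst hU hw.1.le (hh₀ w.1).hasDerivAt
        (fun s hs => (hUev (hmem hs)).differentiableAt_iff.1 (hd₁ _ (hmem hs)))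
        (fun s hs => hd₂ _ (hmem hs)) (hc₂.comp (by fun_prop) fun s hs =>
          mk_mem_closure_nozzle (hlt w.1) ⟨hs.1, hs.2.trans hw.2.le⟩) (fun s hs => ?_) ?_
      · rw [pd1, ← (hUev (hmem hs)).fderiv_eq]
        exact hdiv _ (hmem hs)
      · rw [hslip, hUu (mk_mem_closure_nozzle (hlt w.1) (left_mem_Icc.2 (hlt w.1).le))]
    · have hcont : Continuous fun s => U (w.1, s) := hU.continuous.comp (by fun_prop)
      exact (hcont.integral_hasStrictDerivAt (h₀ w.1) w.2).hasDerivAt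
  have hflux : fluxForm u₁ u₂ z = fluxForm U u₂ z := by
    rw [fluxForm, fluxForm, hUu (subset_closure hz)]
  exact hflux ▸ hψ.congr_of_eventuallyEq hψU.symm

lemma bijOn_streamFunction {x : ℝ} (hlt : h₀ x < h₁ x)
    (hu₁ : ContinuousOn u₁ (closure (nozzle h₀ h₁))) (hpos : ∀ w ∈ nozzle h₀ h₁, 0 < u₁ w) :
    BijOn (fun y => streamFunction h₀ u₁ (x, y)) (Ioo (h₀ x) (h₁ x))
      (Ioo 0 (∫ s in h₀ x..h₁ x, u₁ (x, s))) :=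
  bijOn_integral_of_pos hlt.le
    (hu₁.comp (by fun_prop) fun _ hs => mk_mem_closure_nozzle hlt hs) fun s hs => hpos (x, s) hs

end StreamFunction

section Upstream

variable {h U : ℝ → ℝ} {u₁ u₂ : ℝ × ℝ → ℝ} {K₁ K₂ : NNReal} {S : Set (ℝ × ℝ)} {a b c d : ℝ}

lemma tendsto_streamFunction_atBot (hh : ∀ᶠ x in atBot, h x = c)
    (hu₁ : ∀ᶠ x in atBot, ContinuousOn (fun s => u₁ (x, s)) (Icc c d))
    (hU : TendstoUniformlyOn (fun x s => u₁ (x, s)) U atBot (Icc c d)) {t : ℝ}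
    (ht : t ∈ Icc c d) :
    Tendsto (fun x => streamFunction h u₁ (x, t)) atBot (𝓝 (∫ s in c..t, U s)) := by
  have hsub : uIcc c t ⊆ Icc c d := uIcc_of_le ht.1 ▸ Icc_subset_Icc_right ht.2
  refine ((hU.mono hsub).tendsto_intervalIntegral_of_continuousOn
    (hu₁.mono fun x hx => hx.mono hsub)).congr' ?_
  filter_upwards [hh] with x hx
  rw [streamFunction, hx]

lemma hasDerivAt_integral_eq_integral_vorticity {V : Set ℝ} {x : ℝ} (hV : V ∈ 𝓝 x)
    (hab : a ≤ b) (hS : IsOpen S) (hVS : V ×ˢ Icc a b ⊆ S) (hu₁ : ContDiffOn ℝ 1 u₁ S)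
    (hu₂ : ContDiffOn ℝ 1 u₂ S) (hK₂ : LipschitzOnWith K₂ u₂ S) :
    HasDerivAt (fun x => ∫ y in a..b, u₂ (x, y))
      ((∫ y in a..b, vorticity u₁ u₂ (x, y)) + (u₁ (x, b) - u₁ (x, a))) x := by
  have hmem {y : ℝ} (hy : y ∈ Icc a b) : (x, y) ∈ S := hVS ⟨mem_of_mem_nhds hV, hy⟩
  have hslice {g : ℝ × ℝ → ℝ} (hg : ContinuousOn g S) :
      ContinuousOn (fun y => g (x, y)) (Icc a b) := hg.comp (by fun_prop) fun _ hy => hmem hy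
  have hdiff {g : ℝ × ℝ → ℝ} (hg : ContDiffOn ℝ 1 g S) {y : ℝ} (hy : y ∈ Ioo a b) :
      DifferentiableAt ℝ g (x, y) :=
    (hg.differentiableOn one_ne_zero).differentiableAt
      (hS.mem_nhds (hmem (Ioo_subset_Icc_self hy)))
  have hvort : IntervalIntegrable (fun y => vorticity u₁ u₂ (x, y)) volume a b :=
    (hslice (continuousOn_vorticity hS hu₁ hu₂)).intervalIntegrable_of_Icc hab
  have hpd2 : IntervalIntegrable (fun y => pd2 u₁ (x, y)) volume a b :=
    (hslice (continuousOn_pd2 hS hu₁)).intervalIntegrable_of_Icc hab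
  have hftc : ∫ y in a..b, pd2 u₁ (x, y) = u₁ (x, b) - u₁ (x, a) :=
    intervalIntegral.integral_eq_sub_of_hasDerivAt_of_le (f := fun y => u₁ (x, y)) hab
      (hslice hu₁.continuousOn) (fun y hy => hasDerivAt_pd2 (hdiff hu₁ hy)) hpd2
  rw [← hftc, ← intervalIntegral.integral_add hvort hpd2]
  simp only [vorticity, sub_add_cancel]
  exact (intervalIntegrable_and_hasDerivAt_integral_pd1 hV hab (hK₂.mono hVS)
    fun y hy => hdiff hu₂ hy).2

lemma tendsto_integral_vorticity {ι : Type*} {l : Filter ι} [l.IsCountablyGenerated]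
    {x : ι → ℝ} {ω : ℝ → ℝ} (hab : a ≤ b) (hS : IsOpen S)
    (hxS : ∀ᶠ i in l, ∀ y ∈ Icc a b, (x i, y) ∈ S)
    (hu₁ : ContDiffOn ℝ 1 u₁ S) (hu₂ : ContDiffOn ℝ 1 u₂ S)
    (hK₁ : LipschitzOnWith K₁ u₁ S) (hK₂ : LipschitzOnWith K₂ u₂ S)
    (hω : ∀ y ∈ Icc a b, Tendsto (fun i => vorticity u₁ u₂ (x i, y)) l (𝓝 (ω y))) :
    Tendsto (fun i => ∫ y in a..b, vorticity u₁ u₂ (x i, y)) l (𝓝 (∫ y in a..b, ω y)) := by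
  have hsub : uIoc a b ⊆ Icc a b := uIoc_of_le hab ▸ Ioc_subset_Icc_self
  refine intervalIntegral.tendsto_integral_filter_of_dominated_convergence
    (fun _ => (K₂ + K₁ : ℝ)) ?_ ?_ intervalIntegrable_const
    (Eventually.of_forall fun y hy => hω y (hsub hy))
  · filter_upwards [hxS] with i hi
    exact ((continuousOn_vorticity hS hu₁ hu₂).comp (by fun_prop) fun y hy =>
      hi y (hsub hy)).aestronglyMeasurable measurableSet_uIoc
  · filter_upwards [hxS] with i hi
    exact Eventually.of_forall fun y hy =>
      abs_vorticity_le_of_lipschitzOnWith (hS.mem_nhds (hi y (hsub hy))) hK₁ hK₂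

lemma sub_eq_neg_integral_of_tendsto_vorticity {ω : ℝ → ℝ} {L C : ℝ}
    (hab : a ≤ b) (hS : IsOpen S) (hstrip : Iio L ×ˢ Icc a b ⊆ S)
    (hu₁ : ContDiffOn ℝ 1 u₁ S) (hu₂ : ContDiffOn ℝ 1 u₂ S)
    (hK₁ : LipschitzOnWith K₁ u₁ S) (hK₂ : LipschitzOnWith K₂ u₂ S)
    (hC : ∀ z ∈ Iio L ×ˢ Icc a b, |u₂ z| ≤ C)
    (hUa : Tendsto (fun x => u₁ (x, a)) atBot (𝓝 (U a)))
    (hUb : Tendsto (fun x => u₁ (x, b)) atBot (𝓝 (U b)))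
    (hω : ∀ y ∈ Icc a b, Tendsto (fun x => vorticity u₁ u₂ (x, y)) atBot (𝓝 (ω y))) :
    U b - U a = -∫ y in a..b, ω y := by
  have hsub : uIoc a b ⊆ Icc a b := uIoc_of_le hab ▸ Ioc_subset_Icc_self
  have hbound : ∀ᶠ x in atBot, ‖∫ y in a..b, u₂ (x, y)‖ ≤ C * |b - a| := by
    filter_upwards [eventually_lt_atBot L] with x hx
    exact intervalIntegral.norm_integral_le_of_norm_le_const fun y hy => hC _ ⟨hx, hsub hy⟩
  have hderiv := (eventually_lt_atBot L).mono fun x hx =>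
    hasDerivAt_integral_eq_integral_vorticity (Iio_mem_nhds hx) hab hS hstrip hu₁ hu₂ hK₂
  have hlim := tendsto_integral_vorticity hab hS
    ((eventually_lt_atBot L).mono fun x hx y hy => hstrip ⟨hx, hy⟩) hu₁ hu₂ hK₁ hK₂ hω
  linarith [eq_zero_of_tendsto_deriv_atBot hderiv hbound (hlim.add (hUb.sub hUa))]

end Upstream

namespace IsEulerSlip

variable {h₀ h₁ U F : ℝ → ℝ} {Ω : Set (ℝ × ℝ)} {u : ℝ × ℝ → ℝ × ℝ} {p : ℝ × ℝ → ℝ}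
  {z : ℝ × ℝ} {Q L c d : ℝ}

lemma contDiffOn_fst (hu : IsEulerSlip h₀ h₁ Ω u p) : ContDiffOn ℝ 2 (fun z => (u z).1) Ω :=
  contDiff_fst.comp_contDiffOn hu.1

lemma contDiffOn_snd (hu : IsEulerSlip h₀ h₁ Ω u p) : ContDiffOn ℝ 2 (fun z => (u z).2) Ω :=
  contDiff_snd.comp_contDiffOn hu.1

lemma differentiableAt_fst (hu : IsEulerSlip h₀ h₁ Ω u p) (hΩ : IsOpen Ω) (hz : z ∈ Ω) :
    DifferentiableAt ℝ (fun z => (u z).1) z :=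
  (hu.contDiffOn_fst.differentiableOn two_ne_zero).differentiableAt (hΩ.mem_nhds hz)

lemma differentiableAt_snd (hu : IsEulerSlip h₀ h₁ Ω u p) (hΩ : IsOpen Ω) (hz : z ∈ Ω) :
    DifferentiableAt ℝ (fun z => (u z).2) z :=
  (hu.contDiffOn_snd.differentiableOn two_ne_zero).differentiableAt (hΩ.mem_nhds hz)

lemma exists_lipschitzOnWith (hu : IsEulerSlip h₀ h₁ Ω u p) :
    ∃ K, LipschitzOnWith K (fun z => (u z).1) (closure Ω) ∧
      LipschitzOnWith K (fun z => (u z).2) (closure Ω) := by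
  obtain ⟨K, hK⟩ := hu.2.1
  exact ⟨K, one_mul K ▸ LipschitzWith.prod_fst.comp_lipschitzOnWith hK,
    one_mul K ▸ LipschitzWith.prod_snd.comp_lipschitzOnWith hK⟩

lemma continuousOn_fst (hu : IsEulerSlip h₀ h₁ Ω u p) :
    ContinuousOn (fun z => (u z).1) (closure Ω) :=
  hu.exists_lipschitzOnWith.choose_spec.1.continuousOn

lemma hasStrictFDerivAt_streamFunction (hu : IsEulerSlip h₀ h₁ (nozzle h₀ h₁) u p)
    (hlt : ∀ x, h₀ x < h₁ x) (hh₀ : Differentiable ℝ h₀) (hh₁ : Continuous h₁)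
    (hz : z ∈ nozzle h₀ h₁) :
    HasStrictFDerivAt (streamFunction h₀ fun z => (u z).1)
      (fluxForm (fun z => (u z).1) (fun z => (u z).2) z) z := by
  have hΩ := isOpen_nozzle hh₀.continuous hh₁
  obtain ⟨K, hK₁, hK₂⟩ := hu.exists_lipschitzOnWith
  exact _root_.hasStrictFDerivAt_streamFunction hlt hh₀ hh₁ hK₁ hK₂.continuousOn
    (fun _ => hu.differentiableAt_fst hΩ) (fun _ => hu.differentiableAt_snd hΩ)
    (fun w hw => (hu.2.2.2.1 w hw).2.2) (fun x => (hu.2.2.2.2 x).1) hz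

lemma exists_vorticity_eq_comp_streamFunction (hu : IsEulerSlip h₀ h₁ (nozzle h₀ h₁) u p)
    (hlt : ∀ x, h₀ x < h₁ x) (hh₀ : Differentiable ℝ h₀) (hh₁ : Continuous h₁)
    (hflux : ∀ x, ∫ s in h₀ x..h₁ x, (u (x, s)).1 = Q)
    (hpos : ∀ z ∈ nozzle h₀ h₁, 0 < (u z).1) :
    ∃ F : ℝ → ℝ, ContinuousOn F (Ioo 0 Q) ∧ ∀ z ∈ nozzle h₀ h₁,
      -vorticity (fun z => (u z).1) (fun z => (u z).2) z =
        F (streamFunction h₀ (fun z => (u z).1) z) := by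
  have hΩ := isOpen_nozzle hh₀.continuous hh₁
  refine exists_continuousOn_comp_of_hasFDerivAt_smul hΩ isOpen_Ioo
    (fun z hz => hu.hasStrictFDerivAt_streamFunction hlt hh₀ hh₁ hz)
    (fun z hz => by simpa [fluxForm] using (hpos z hz).ne')
    (fun x => hflux x ▸ bijOn_streamFunction (hlt x) hu.continuousOn_fst hpos)
    (fun z hz => hasFDerivAt_bernoulli (hu.differentiableAt_fst hΩ hz)
      (hu.differentiableAt_snd hΩ hz)
      ((hu.2.2.1.differentiableOn one_ne_zero).differentiableAt (hΩ.mem_nhds hz))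
      (hu.2.2.2.1 z hz).1 (hu.2.2.2.1 z hz).2.1)
    (continuousOn_vorticity hΩ (hu.contDiffOn_fst.of_le one_le_two)
      (hu.contDiffOn_snd.of_le one_le_two)).neg

lemma abs_snd_le_of_flat {K : NNReal} (hu : IsEulerSlip h₀ h₁ (nozzle h₀ h₁) u p)
    (hcd : c < d) (hup : ∀ x ≤ L, h₀ x = c ∧ h₁ x = d)
    (hK : LipschitzOnWith K (fun z => (u z).2) (closure (nozzle h₀ h₁))) :
    ∀ z ∈ Iio L ×ˢ Icc c d, |(u z).2| ≤ K * (d - c) := by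
  rintro ⟨x, y⟩ ⟨hx : x < L, hy⟩
  obtain ⟨h₀x, h₁x⟩ := hup x hx.le
  have hmem {s : ℝ} (hs : s ∈ Icc c d) : (x, s) ∈ closure (nozzle h₀ h₁) :=
    mk_mem_closure_nozzle (by rwa [h₀x, h₁x]) (by rwa [h₀x, h₁x])
  have hflat : deriv h₀ x = 0 := by
    have hconst : h₀ =ᶠ[𝓝 x] fun _ => c :=
      (eventually_lt_nhds hx).mono fun x' hx' => (hup x' hx'.le).1
    rw [hconst.deriv_eq, deriv_const]
  have hwall : (u (x, c)).2 = 0 := by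
    have := (hu.2.2.2.2 x).1
    rwa [h₀x, hflat, zero_mul] at this
  calc |(u (x, y)).2| = dist (u (x, y)).2 (u (x, c)).2 := by rw [hwall, Real.dist_0_eq_abs]
    _ ≤ K * dist (x, y) (x, c) := hK.dist_le_mul _ (hmem hy) _ (hmem (left_mem_Icc.2 hcd.le))
    _ = K * (y - c) := by
      rw [dist_prod_same_left, Real.dist_eq, abs_of_nonneg (sub_nonneg.2 hy.1)]
    _ ≤ K * (d - c) := by gcongr; exact hy.2

lemma eventually_continuousOn_slice (hu : IsEulerSlip h₀ h₁ (nozzle h₀ h₁) u p) (hcd : c < d)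
    (hup : ∀ x ≤ L, h₀ x = c ∧ h₁ x = d) :
    ∀ᶠ x in atBot, ContinuousOn (fun s => (u (x, s)).1) (Icc c d) := by
  filter_upwards [eventually_le_atBot L] with x hx
  obtain ⟨h₀x, h₁x⟩ := hup x hx
  exact hu.continuousOn_fst.comp (by fun_prop) fun s hs =>
    mk_mem_closure_nozzle (by rwa [h₀x, h₁x]) (by rwa [h₀x, h₁x])

lemma tendsto_streamFunction (hu : IsEulerSlip h₀ h₁ (nozzle h₀ h₁) u p) (hcd : c < d)
    (hup : ∀ x ≤ L, h₀ x = c ∧ h₁ x = d)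
    (hU : TendstoUniformlyOn (fun x s => (u (x, s)).1) U atBot (Icc c d)) {t : ℝ}
    (ht : t ∈ Icc c d) :
    Tendsto (fun x => streamFunction h₀ (fun z => (u z).1) (x, t)) atBot
      (𝓝 (∫ s in c..t, U s)) :=
  tendsto_streamFunction_atBot ((eventually_le_atBot L).mono fun x hx => (hup x hx).1)
    (hu.eventually_continuousOn_slice hcd hup) hU ht

lemma bijOn_integral_profile (hu : IsEulerSlip h₀ h₁ (nozzle h₀ h₁) u p) (hcd : c < d)
    (hup : ∀ x ≤ L, h₀ x = c ∧ h₁ x = d) (hflux : ∀ x, ∫ s in h₀ x..h₁ x, (u (x, s)).1 = Q)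
    (hU : TendstoUniformlyOn (fun x s => (u (x, s)).1) U atBot (Icc c d))
    (hUpos : ∀ t ∈ Ioo c d, 0 < U t) :
    BijOn (fun t => ∫ s in c..t, U s) (Ioo c d) (Ioo 0 Q) := by
  have hQ : ∫ s in c..d, U s = Q := by
    refine tendsto_nhds_unique (hu.tendsto_streamFunction hcd hup hU (right_mem_Icc.2 hcd.le))
      (tendsto_const_nhds.congr' ?_)
    filter_upwards [eventually_le_atBot L] with x hx
    rw [← hflux x, (hup x hx).2, streamFunction]
  exact hQ ▸ bijOn_integral_of_pos hcd.le
    (hU.continuousOn (hu.eventually_continuousOn_slice hcd hup).frequently) hUpos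

lemma tendsto_vorticity (hu : IsEulerSlip h₀ h₁ (nozzle h₀ h₁) u p) (hcd : c < d)
    (hup : ∀ x ≤ L, h₀ x = c ∧ h₁ x = d)
    (hU : TendstoUniformlyOn (fun x s => (u (x, s)).1) U atBot (Icc c d))
    (hF : ContinuousOn F (Ioo 0 Q))
    (hFω : ∀ z ∈ nozzle h₀ h₁, -vorticity (fun z => (u z).1) (fun z => (u z).2) z =
      F (streamFunction h₀ (fun z => (u z).1) z))
    {t : ℝ} (ht : t ∈ Ioo c d) (hφt : ∫ s in c..t, U s ∈ Ioo 0 Q) :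
    Tendsto (fun x => vorticity (fun z => (u z).1) (fun z => (u z).2) (x, t)) atBot
      (𝓝 (-F (∫ s in c..t, U s))) := by
  have hψ := hu.tendsto_streamFunction hcd hup hU (Ioo_subset_Icc_self ht)
  refine ((hF.continuousAt (isOpen_Ioo.mem_nhds hφt)).tendsto.comp hψ).neg.congr' ?_
  filter_upwards [eventually_le_atBot L] with x hx
  obtain ⟨h₀x, h₁x⟩ := hup x hx
  rw [Function.comp_apply, ← hFω _ ⟨h₀x.trans_lt ht.1, ht.2.trans_eq h₁x.symm⟩, neg_neg]

lemma hasDerivAt_profile (hu : IsEulerSlip h₀ h₁ (nozzle h₀ h₁) u p)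
    (hh₀ : Continuous h₀) (hh₁ : Continuous h₁) (hcd : c < d)
    (hup : ∀ x ≤ L, h₀ x = c ∧ h₁ x = d)
    (hU : TendstoUniformlyOn (fun x s => (u (x, s)).1) U atBot (Icc c d))
    (hφ : MapsTo (fun t => ∫ s in c..t, U s) (Ioo c d) (Ioo 0 Q)) (hF : ContinuousOn F (Ioo 0 Q))
    (hFω : ∀ z ∈ nozzle h₀ h₁, -vorticity (fun z => (u z).1) (fun z => (u z).2) z =
      F (streamFunction h₀ (fun z => (u z).1) z)) {t : ℝ} (ht : t ∈ Ioo c d) :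
    HasDerivAt U (F (∫ s in c..t, U s)) t := by
  obtain ⟨K, hK₁, hK₂⟩ := hu.exists_lipschitzOnWith
  have hUc : ContinuousOn U (Icc c d) :=
    hU.continuousOn (hu.eventually_continuousOn_slice hcd hup).frequently
  refine hasDerivAt_of_sub_eq_integral (G := fun t => F (∫ s in c..t, U s)) isOpen_Ioo
    (hF.comp ((continuousOn_integral_Icc hcd.le hUc).mono Ioo_subset_Icc_self) hφ)
    (fun a ha b hb hab => ?_) ht
  have hsub : Icc a b ⊆ Ioo c d := Icc_subset_Ioo ha.1 hb.2
  have hstrip : Iio L ×ˢ Icc a b ⊆ nozzle h₀ h₁ := fun w ⟨hw₁, hw₂⟩ =>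
    ⟨(hup w.1 (le_of_lt hw₁)).1.trans_lt (hsub hw₂).1,
      (hsub hw₂).2.trans_eq (hup w.1 (le_of_lt hw₁)).2.symm⟩
  rw [sub_eq_neg_integral_of_tendsto_vorticity hab (isOpen_nozzle hh₀ hh₁) hstrip
    (hu.contDiffOn_fst.of_le one_le_two) (hu.contDiffOn_snd.of_le one_le_two)
    (hK₁.mono subset_closure) (hK₂.mono subset_closure)
    (fun w hw => hu.abs_snd_le_of_flat hcd hup hK₂ w
      ⟨hw.1, Ioo_subset_Icc_self (hsub hw.2)⟩)
    (hU.tendsto_at (Ioo_subset_Icc_self ha)) (hU.tendsto_at (Ioo_subset_Icc_self hb))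
    fun y hy => hu.tendsto_vorticity hcd hup hU hF hFω (hsub hy) (hφ (hsub hy)),
    intervalIntegral.integral_neg, neg_neg]

end IsEulerSlip

lemma tendstoUniformlyOn_atBot_iff_abs_sub_lt {F : ℝ → ℝ → ℝ} {f : ℝ → ℝ} {s : Set ℝ} :
    TendstoUniformlyOn F f atBot s ↔ ∀ ε > 0, ∃ M, ∀ x ≤ M, ∀ y ∈ s, |F x y - f y| < ε := by
  simp only [Metric.tendstoUniformlyOn_iff, eventually_atBot, dist_comm (f _), Real.dist_eq]

section Poiseuille

lemma poiseuille_pos {Q t : ℝ} (hQ : 0 < Q) (ht : t ∈ Ioo 0 1) : 0 < 6 * Q * t * (1 - t) :=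
  mul_pos (mul_pos (mul_pos (by norm_num) hQ) ht.1) (sub_pos.2 ht.2)

lemma integral_poiseuille (Q t : ℝ) :
    ∫ s in (0 : ℝ)..t, 6 * Q * s * (1 - s) = Q * (3 * t ^ 2 - 2 * t ^ 3) := by
  have hprim (s : ℝ) : HasDerivAt (fun s => Q * (3 * s ^ 2 - 2 * s ^ 3)) (6 * Q * s * (1 - s)) s :=
    ((((hasDerivAt_id' s).pow 2).const_mul 3).sub
      (((hasDerivAt_id' s).pow 3).const_mul 2)).const_mul Q |>.congr_deriv (by push_cast; ring)
  rw [intervalIntegral.integral_eq_sub_of_hasDerivAt (fun s _ => hprim s)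
    ((by fun_prop : Continuous fun s => 6 * Q * s * (1 - s)).intervalIntegrable _ _)]
  ring

lemma deriv_poiseuille (Q t : ℝ) :
    deriv (fun s => 6 * Q * s * (1 - s)) t = 6 * Q * (1 - 2 * t) :=
  (((hasDerivAt_id' t).const_mul (6 * Q)).mul ((hasDerivAt_id' t).const_sub 1)).deriv.trans
    (by ring)

end Poiseuille

theorem stmt2_general {h₀ h₁ U f : ℝ → ℝ} {u : ℝ × ℝ → ℝ × ℝ} {p : ℝ × ℝ → ℝ} {Q L c d : ℝ}
    (hh₀ : Differentiable ℝ h₀) (hh₁ : Continuous h₁) (hlt : ∀ x, h₀ x < h₁ x)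
    (hup : ∀ x ≤ L, h₀ x = c ∧ h₁ x = d) (hu : IsEulerSlip h₀ h₁ (nozzle h₀ h₁) u p)
    (hflux : ∀ x, ∫ s in h₀ x..h₁ x, (u (x, s)).1 = Q)
    (hpos : ∀ z ∈ nozzle h₀ h₁, 0 < (u z).1)
    (hU : TendstoUniformlyOn (fun x s => (u (x, s)).1) U atBot (Icc c d))
    (hUpos : ∀ t ∈ Ioo c d, 0 < U t)
    (hf : ∀ t ∈ Ioo c d, f (∫ s in c..t, U s) = deriv U t) :
    ∀ z ∈ nozzle h₀ h₁,
      (0 < streamFunction h₀ (fun z => (u z).1) z ∧ streamFunction h₀ (fun z => (u z).1) z < Q) ∧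
        lap (streamFunction h₀ fun z => (u z).1) z =
          f (streamFunction h₀ (fun z => (u z).1) z) := by
  intro z hz
  have hcd : c < d := by simpa only [hup L le_rfl] using hlt L
  obtain ⟨F, hF, hFω⟩ := hu.exists_vorticity_eq_comp_streamFunction hlt hh₀ hh₁ hflux hpos
  have hψz : streamFunction h₀ (fun z => (u z).1) z ∈ Ioo 0 Q :=
    hflux z.1 ▸ (bijOn_streamFunction (hlt z.1) hu.continuousOn_fst hpos).mapsTo hz
  have hφ := hu.bijOn_integral_profile hcd hup hflux hU hUpos
  obtain ⟨t, ht, hφt : ∫ s in c..t, U s = _⟩ := hφ.surjOn hψz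
  have hlap : lap (streamFunction h₀ fun z => (u z).1) z =
      -vorticity (fun z => (u z).1) (fun z => (u z).2) z :=
    lap_eq_neg_vorticity (((isOpen_nozzle hh₀.continuous hh₁).eventually_mem hz).mono fun w hw =>
      (hu.hasStrictFDerivAt_streamFunction hlt hh₀ hh₁ hw).hasFDerivAt)
  have hderiv := hu.hasDerivAt_profile hh₀.continuous hh₁ hcd hup hU hφ.mapsTo hF hFω ht
  refine ⟨hψz, ?_⟩
  rw [hlap, hFω z hz, ← hφt, hf t ht, hderiv.deriv]

/-- Stream function formulation: for a solution of the Euler system with flux `Q`,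
positive horizontal velocity and Poiseuille upstream behavior, the stream function
`ψ(x₁,x₂) = ∫_{h₀(x₁)}^{x₂} u₁(x₁,s) ds` satisfies `0 < ψ < Q` in `Ω` and solves
`Δψ = f(ψ)` in `Ω`, where `f(s) = 6Q(1 − 2κ(s))` and `κ` inverts `t ↦ Q(3t²−2t³)`. -/
theorem stmt2
    (Q α : ℝ) (hQ : 0 < Q) (hα : α ∈ Set.Ioo (0 : ℝ) 1)
    (κ : ℝ → ℝ) (hκ : ∀ t ∈ Set.Icc (0 : ℝ) 1, κ (Q * (3 * t ^ 2 - 2 * t ^ 3)) = t)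
    (f : ℝ → ℝ) (hf : ∀ s : ℝ, f s = 6 * Q * (1 - 2 * κ s))
    (h₀ h₁ : ℝ → ℝ)
    (hh₀ : ContDiff ℝ 2 h₀) (hh₁ : ContDiff ℝ 2 h₁)
    (hh₀α : ∃ C : ℝ, ∀ x y : ℝ, |deriv (deriv h₀) x - deriv (deriv h₀) y| ≤ C * |x - y| ^ α)
    (hh₁α : ∃ C : ℝ, ∀ x y : ℝ, |deriv (deriv h₁) x - deriv (deriv h₁) y| ≤ C * |x - y| ^ α)
    (hlt : ∀ x₁ : ℝ, h₀ x₁ < h₁ x₁)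
    (Lm Lp a b : ℝ) (hLm : Lm < 0) (hLp : 0 < Lp)
    (ha : 0 ≤ a) (hab : a < b) (hb : b ≤ 1)
    (hup : ∀ x₁ ≤ Lm, h₀ x₁ = 0 ∧ h₁ x₁ = 1)
    (hdown : ∀ x₁ ≥ Lp, h₀ x₁ = a ∧ h₁ x₁ = b)
    (Ω : Set (ℝ × ℝ)) (hΩ : Ω = {x : ℝ × ℝ | h₀ x.1 < x.2 ∧ x.2 < h₁ x.1})
    (u : ℝ × ℝ → ℝ × ℝ) (p : ℝ × ℝ → ℝ)
    (hu : IsEulerSlip h₀ h₁ Ω u p)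
    (hflux : ∀ x₁ : ℝ, (∫ s in (h₀ x₁)..(h₁ x₁), (u (x₁, s)).1) = Q)
    (hu1 : ∀ x ∈ Ω, 0 < (u x).1)
    (huf : ∀ ε > 0, ∃ M : ℝ, ∀ x₁ ≤ M, ∀ x₂ ∈ Set.Icc (0 : ℝ) 1,
      |(u (x₁, x₂)).1 - 6 * Q * x₂ * (1 - x₂)| < ε)
    (ψ : ℝ × ℝ → ℝ)
    (hψ : ∀ x : ℝ × ℝ, ψ x = ∫ s in (h₀ x.1)..(x.2), (u (x.1, s)).1) :
    ∀ x ∈ Ω, (0 < ψ x ∧ ψ x < Q) ∧ lap ψ x = f (ψ x) := by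
  obtain rfl : ψ = streamFunction h₀ fun z => (u z).1 := funext hψ
  subst hΩ
  exact stmt2_general (hh₀.differentiable two_ne_zero) hh₁.continuous hlt hup hu hflux hu1
    (tendstoUniformlyOn_atBot_iff_abs_sub_lt.2 huf) (fun _ => poiseuille_pos hQ) fun t ht => by
      rw [integral_poiseuille, deriv_poiseuille, hf, hκ t (Ioo_subset_Icc_self ht)]
end
end

section
/- The function κ (the inverse of φ̄₁(t)=Q(3t²−2t³) on [0,1]) is Hölder continuous with exponent 1/2 on [0,Q] (there exists C>0 with |κ(t)−κ(t')|≤C|t−t'|^{1/2} for all t,t'∈[0,Q]) and is infinitely differentiable on the open interval (0,Q). Consequently the function f(s)=6Q(1−2κ(s)) satisfies f∈C^{1/2}([0,Q])∩C^∞((0,Q)); moreover this regularity is optimal: for every β>1/2 there is no constant C with |f(t)−f(t')|≤C|t−t'|^β for all t,t'∈[0,Q]. -/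
open Real Set MeasureTheory

noncomputable section

/-!
Put `φ t = Q (3t² - 2t³)`. For `a ≤ b` in `[0,1]`,
`φ b - φ a - Q (b - a)² = 2 Q (b - a) (a (1 - a) + a (1 - b) + b (1 - b)) ≥ 0`, so `φ` separates
points at least quadratically and its inverse is `1/2`-Hölder. Since `φ' t = 6 Q t (1 - t)` vanishes
only at the endpoints, the inverse function theorem gives smoothness inside. Conversely
`φ t = O(t²)` at `0`, so a `β`-Hölder bound for the inverse would give `t = O(t ^ (2 * β))` as
`t → 0⁺`, which forces `2 * β ≤ 1`.
-/

section LeftInverse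

open Filter Topology Asymptotics

lemma contDiffAt_of_eventually_leftInverse {𝕜 E F : Type*} [RCLike 𝕜]
    [NormedAddCommGroup E] [NormedSpace 𝕜 E] [CompleteSpace E]
    [NormedAddCommGroup F] [NormedSpace 𝕜 F] {n : WithTop ℕ∞} (hn : n ≠ 0)
    {φ : E → F} {φ' : E ≃L[𝕜] F} {κ : F → E} {a : E} (hφ : ContDiffAt 𝕜 n φ a)
    (hφ' : HasFDerivAt φ (φ' : E →L[𝕜] F) a) (hκ : ∀ᶠ x in 𝓝 a, κ (φ x) = x) :
    ContDiffAt 𝕜 n κ (φ a) :=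
  (hφ.to_localInverse hφ' hn).congr_of_eventuallyEq
    ((hφ.hasStrictFDerivAt' hφ' hn).localInverse_unique hκ)

lemma dist_le_rpow_of_leftInvOn {X Y : Type*} [PseudoMetricSpace X] [PseudoMetricSpace Y]
    {φ : X → Y} {κ : Y → X} {S : Set X} {c p : ℝ} (hc : 0 < c) (hp : 0 < p)
    (hκ : LeftInvOn κ φ S) (hφ : ∀ a ∈ S, ∀ b ∈ S, c * dist a b ^ p ≤ dist (φ a) (φ b)) :
    ∀ y ∈ φ '' S, ∀ y' ∈ φ '' S,
      dist (κ y) (κ y') ≤ c⁻¹ ^ (1 / p) * dist y y' ^ (1 / p) := by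
  rintro _ ⟨a, ha, rfl⟩ _ ⟨b, hb, rfl⟩
  rw [hκ ha, hκ hb, ← mul_rpow (by positivity) dist_nonneg, one_div,
    le_rpow_inv_iff_of_pos dist_nonneg (by positivity) hp, le_inv_mul_iff₀ hc]
  exact hφ a ha b hb

lemma le_of_rpow_isBigO_rpow {α : Type*} {l : Filter α} [l.NeBot] {d : α → ℝ}
    (hd : Tendsto d l (𝓝[>] 0)) {r s : ℝ} (h : (fun x => d x ^ r) =O[l] fun x => d x ^ s) :
    s ≤ r := by
  by_contra! hrs
  have hpos : ∀ᶠ x in l, 0 < d x := hd.eventually self_mem_nhdsWithin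
  have hlim : Tendsto (fun x => d x ^ (s - r)) l (𝓝 0) := by
    simpa only [zero_rpow (sub_pos.2 hrs).ne'] using
      (tendsto_nhds_of_tendsto_nhdsWithin hd).rpow_const (Or.inr (sub_pos.2 hrs).le)
  have hsr : (fun x => d x ^ s) =o[l] fun x => d x ^ r :=
    isLittleO_of_tendsto' (hpos.mono fun x hx h0 => absurd h0 (rpow_pos_of_pos hx r).ne')
      (hlim.congr' (hpos.mono fun x hx => rpow_sub hx s r))
  exact isLittleO_irrefl (hpos.frequently.mono fun x hx => (rpow_pos_of_pos hx r).ne')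
    (h.trans_isLittleO hsr)

lemma mul_le_one_of_holder_leftInvOn {X Y : Type*} [MetricSpace X] [PseudoMetricSpace Y]
    {φ : X → Y} {κ : Y → X} {S : Set X} {a : X} {p β C : ℝ} (haS : a ∈ S) (ha : AccPt a (𝓟 S))
    (hβ : 0 ≤ β) (hκ : LeftInvOn κ φ S)
    (hφ : (fun x => dist (φ x) (φ a)) =O[𝓝[S \ {a}] a] fun x => dist x a ^ p)
    (hC : ∀ y ∈ φ '' S, dist (κ y) (κ (φ a)) ≤ C * dist y (φ a) ^ β) :
    p * β ≤ 1 := by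
  have := accPt_principal_iff_nhdsWithin.1 ha
  have hdist : Tendsto (dist · a) (𝓝[S \ {a}] a) (𝓝[>] 0) :=
    tendsto_nhdsWithin_iff.2 ⟨tendsto_iff_dist_tendsto_zero.1 nhdsWithin_le_nhds,
      eventually_mem_nhdsWithin.mono fun x hx => dist_pos.2 hx.2⟩
  have hinv : (dist · a) =O[𝓝[S \ {a}] a] fun x => dist (φ x) (φ a) ^ β :=
    .of_bound C <| eventually_mem_nhdsWithin.mono fun x hx => by
      simpa only [hκ hx.1, hκ haS, norm_of_nonneg dist_nonneg,
        norm_of_nonneg (rpow_nonneg dist_nonneg β)] using hC (φ x) (mem_image_of_mem φ hx.1)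
  refine le_of_rpow_isBigO_rpow hdist ?_
  calc (fun x => dist x a ^ (1 : ℝ))
      =O[𝓝[S \ {a}] a] fun x => dist (φ x) (φ a) ^ β := by simpa only [rpow_one] using hinv
    _ =O[𝓝[S \ {a}] a] fun x => (dist x a ^ p) ^ β :=
      hφ.rpow hβ (.of_forall fun x => rpow_nonneg dist_nonneg p)
    _ = fun x => dist x a ^ (p * β) := by simp only [rpow_mul dist_nonneg]

end LeftInverse

/-- The cubic `φ̄₁` of the paper, with `Q` as an explicit parameter: it rises from `0` to `Q` over
`[0,1]` with zero slope at both ends. It is defined on all of `ℝ`, so its inverse `κ` is encoded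
as a left inverse on `[0,1]`. -/
def smoothstep (Q t : ℝ) : ℝ := Q * (3 * t ^ 2 - 2 * t ^ 3)

section Smoothstep

variable {Q a b t : ℝ}

lemma smoothstep_zero (Q : ℝ) : smoothstep Q 0 = 0 := by simp [smoothstep]

lemma smoothstep_one (Q : ℝ) : smoothstep Q 1 = Q := by norm_num [smoothstep]

lemma contDiff_smoothstep (Q : ℝ) {n : WithTop ℕ∞} : ContDiff ℝ n (smoothstep Q) := by
  unfold smoothstep
  fun_prop

lemma hasDerivAt_smoothstep (Q t : ℝ) :
    HasDerivAt (smoothstep Q) (6 * Q * (t * (1 - t))) t :=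
  ((((hasDerivAt_pow 2 t).const_mul 3).sub ((hasDerivAt_pow 3 t).const_mul 2)).const_mul
    Q).congr_deriv (by push_cast; ring)

lemma mul_sq_sub_le_smoothstep_sub (hQ : 0 ≤ Q) (ha : 0 ≤ a) (hab : a ≤ b) (hb : b ≤ 1) :
    Q * (b - a) ^ 2 ≤ smoothstep Q b - smoothstep Q a := by
  have hfactor : smoothstep Q b - smoothstep Q a - Q * (b - a) ^ 2 =
      2 * Q * (b - a) * (a * (1 - a) + a * (1 - b) + b * (1 - b)) := by
    unfold smoothstep
    ring
  have ha_a : 0 ≤ a * (1 - a) := mul_nonneg ha (sub_nonneg.2 (hab.trans hb))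
  have ha_b : 0 ≤ a * (1 - b) := mul_nonneg ha (sub_nonneg.2 hb)
  have hb_b : 0 ≤ b * (1 - b) := mul_nonneg (ha.trans hab) (sub_nonneg.2 hb)
  rw [← sub_nonneg, hfactor]
  exact mul_nonneg (mul_nonneg (by positivity) (sub_nonneg.2 hab))
    (add_nonneg (add_nonneg ha_a ha_b) hb_b)

lemma mul_sq_dist_le_dist_smoothstep (hQ : 0 ≤ Q) (ha : a ∈ Icc (0 : ℝ) 1)
    (hb : b ∈ Icc (0 : ℝ) 1) : Q * dist a b ^ 2 ≤ dist (smoothstep Q a) (smoothstep Q b) := by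
  wlog hab : a ≤ b generalizing a b
  · simpa only [dist_comm] using this hb ha (le_of_not_ge hab)
  rw [dist_comm a, dist_comm (smoothstep Q a), dist_eq, dist_eq, sq_abs]
  exact (mul_sq_sub_le_smoothstep_sub hQ ha.1 hab hb.2).trans (le_abs_self _)

lemma monotoneOn_smoothstep (hQ : 0 ≤ Q) : MonotoneOn (smoothstep Q) (Icc 0 1) :=
  fun _ ha _ hb hab => sub_nonneg.1 <|
    (mul_nonneg hQ (sq_nonneg _)).trans (mul_sq_sub_le_smoothstep_sub hQ ha.1 hab hb.2)

lemma image_smoothstep_Icc (hQ : 0 ≤ Q) : smoothstep Q '' Icc 0 1 = Icc 0 Q := by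
  simpa only [smoothstep_zero, smoothstep_one] using
    (contDiff_smoothstep Q (n := 0)).continuous.continuousOn.image_Icc_of_monotoneOn zero_le_one
      (monotoneOn_smoothstep hQ)

lemma Ioo_subset_image_smoothstep (Q : ℝ) : Ioo 0 Q ⊆ smoothstep Q '' Ioo 0 1 := by
  simpa only [smoothstep_zero, smoothstep_one] using
    intermediate_value_Ioo zero_le_one (contDiff_smoothstep Q (n := 0)).continuous.continuousOn

lemma abs_smoothstep_le (ht : t ∈ Icc (0 : ℝ) 1) : |smoothstep Q t| ≤ 3 * |Q| * t ^ 2 := by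
  have hfactor : |3 - 2 * t| ≤ 3 := abs_le.2 ⟨by linarith [ht.2], by linarith [ht.1]⟩
  calc |smoothstep Q t| = |3 - 2 * t| * |Q| * t ^ 2 := by
        rw [← abs_mul, ← abs_sq t, ← abs_mul, smoothstep]
        ring_nf
    _ ≤ 3 * |Q| * t ^ 2 := by gcongr

end Smoothstep

section InverseOfSmoothstep

open Filter Topology Asymptotics

variable {Q : ℝ} {κ : ℝ → ℝ}

lemma holder_leftInvOn_smoothstep (hQ : 0 < Q) (hκ : LeftInvOn κ (smoothstep Q) (Icc 0 1)) :
    ∀ s ∈ Icc 0 Q, ∀ s' ∈ Icc 0 Q,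
      |κ s - κ s'| ≤ Q⁻¹ ^ ((1 : ℝ) / 2) * |s - s'| ^ ((1 : ℝ) / 2) := by
  simp only [← image_smoothstep_Icc hQ.le, ← dist_eq]
  refine dist_le_rpow_of_leftInvOn hQ two_pos hκ fun a ha b hb => ?_
  simpa only [rpow_two] using mul_sq_dist_le_dist_smoothstep hQ.le ha hb

lemma contDiffOn_leftInvOn_smoothstep (hκ : LeftInvOn κ (smoothstep Q) (Icc 0 1))
    {n : WithTop ℕ∞} : ContDiffOn ℝ n κ (Ioo 0 Q) := by
  intro s hs
  obtain ⟨a, ha, rfl⟩ := Ioo_subset_image_smoothstep Q hs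
  have hQ : 0 < Q := hs.1.trans hs.2
  have hderiv : 6 * Q * (a * (1 - a)) ≠ 0 :=
    (mul_pos (by positivity) (mul_pos ha.1 (sub_pos.2 ha.2))).ne'
  have hleft : ∀ᶠ x in 𝓝 a, κ (smoothstep Q x) = x :=
    mem_of_superset (Icc_mem_nhds ha.1 ha.2) hκ
  have hω : ContDiffAt ℝ ⊤ κ (smoothstep Q a) :=
    contDiffAt_of_eventually_leftInverse WithTop.top_ne_zero (contDiff_smoothstep Q).contDiffAt
      ((hasDerivAt_smoothstep Q a).hasFDerivAt_equiv hderiv) hleft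
  exact (hω.of_le le_top).contDiffWithinAt

lemma le_half_of_holder_leftInvOn_smoothstep (hQ : 0 ≤ Q)
    (hκ : LeftInvOn κ (smoothstep Q) (Icc 0 1)) {β C : ℝ}
    (hC : ∀ s ∈ Icc 0 Q, ∀ s' ∈ Icc 0 Q, |κ s - κ s'| ≤ C * |s - s'| ^ β) :
    β ≤ 1 / 2 := by
  rcases le_total β 0 with hβ | hβ
  · linarith
  have hacc : AccPt (0 : ℝ) (𝓟 (Icc 0 1)) := by
    rw [accPt_principal_iff_nhdsWithin, Icc_sdiff_left, nhdsWithin_Ioc_eq_nhdsGT zero_lt_one]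
    infer_instance
  have hflat : (fun t => dist (smoothstep Q t) (smoothstep Q 0)) =O[𝓝[Icc 0 1 \ {0}] 0]
      fun t => dist t 0 ^ (2 : ℝ) :=
    .of_bound (3 * |Q|) <| eventually_mem_nhdsWithin.mono fun t ht => by
      simpa [smoothstep_zero] using abs_smoothstep_le ht.1
  have h2β : 2 * β ≤ 1 := by
    refine mul_le_one_of_holder_leftInvOn (left_mem_Icc.2 zero_le_one) hacc hβ hκ hflat (C := C) ?_
    rw [image_smoothstep_Icc hQ, smoothstep_zero]
    exact fun s hs => hC s hs 0 (left_mem_Icc.2 hQ)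
  linarith

end InverseOfSmoothstep

/-- Regularity of `κ` and `f`: `κ`, the inverse of `t ↦ Q(3t²−2t³)` on `[0,1]`, is
`1/2`-Hölder on `[0,Q]` and `C^∞` on `(0,Q)`; hence `f(s) = 6Q(1−2κ(s))` belongs to
`C^{1/2}([0,Q]) ∩ C^∞((0,Q))`, and this regularity is optimal: for every `β > 1/2`
there is no constant `C` with `|f(t)−f(t')| ≤ C|t−t'|^β` on `[0,Q]`. -/
theorem stmt3
    (Q : ℝ) (hQ : 0 < Q)
    (κ : ℝ → ℝ) (hκ : ∀ t ∈ Set.Icc (0 : ℝ) 1, κ (Q * (3 * t ^ 2 - 2 * t ^ 3)) = t)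
    (f : ℝ → ℝ) (hf : ∀ s : ℝ, f s = 6 * Q * (1 - 2 * κ s)) :
    (∃ C > 0, ∀ t ∈ Set.Icc (0 : ℝ) Q, ∀ t' ∈ Set.Icc (0 : ℝ) Q,
      |κ t - κ t'| ≤ C * |t - t'| ^ ((1 : ℝ) / 2)) ∧
    ContDiffOn ℝ (⊤ : ℕ∞) κ (Set.Ioo 0 Q) ∧
    (∃ C > 0, ∀ t ∈ Set.Icc (0 : ℝ) Q, ∀ t' ∈ Set.Icc (0 : ℝ) Q,
      |f t - f t'| ≤ C * |t - t'| ^ ((1 : ℝ) / 2)) ∧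
    ContDiffOn ℝ (⊤ : ℕ∞) f (Set.Ioo 0 Q) ∧
    (∀ β : ℝ, (1 : ℝ) / 2 < β →
      ¬ ∃ C : ℝ, ∀ t ∈ Set.Icc (0 : ℝ) Q, ∀ t' ∈ Set.Icc (0 : ℝ) Q,
        |f t - f t'| ≤ C * |t - t'| ^ β) := by
  have hleft : LeftInvOn κ (smoothstep Q) (Icc 0 1) := hκ
  have hholder := holder_leftInvOn_smoothstep hQ hleft
  have hsmooth : ContDiffOn ℝ (⊤ : ℕ∞) κ (Ioo 0 Q) := contDiffOn_leftInvOn_smoothstep hleft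
  have hfκ : ∀ s s', |f s - f s'| = 12 * Q * |κ s - κ s'| := fun s s' => by
    rw [hf, hf, abs_sub_comm (κ s), ← abs_of_pos (by positivity : 0 < 12 * Q), ← abs_mul]
    ring_nf
  refine ⟨⟨_, by positivity, hholder⟩, hsmooth,
    ⟨12 * Q * Q⁻¹ ^ ((1 : ℝ) / 2), by positivity, fun s hs s' hs' => ?_⟩, ?_, ?_⟩
  · rw [hfκ, mul_assoc (12 * Q)]
    gcongr
    exact hholder s hs s' hs'
  · rw [funext hf]
    fun_prop
  · rintro β hβ ⟨C, hC⟩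
    refine hβ.not_ge (le_half_of_holder_leftInvOn_smoothstep hQ.le hleft (C := C / (12 * Q))
      fun s hs s' hs' => ?_)
    rw [div_mul_eq_mul_div, le_div_iff₀' (by positivity), ← hfκ]
    exact hC s hs s' hs'
end
end

section
/- Let d∈(0,1] and let ψ∈C²((0,d))∩C¹([0,d]) satisfy ψ''(x₂)=f(ψ(x₂)) for x₂∈(0,d), ψ(0)=0, and 0<ψ(x₂)<Q for all x₂∈(0,d). Then ψ'(x₂)>0 for all x₂∈(0,d). -/
open Real Set MeasureTheory

noncomputable section

/-!
The profile `φ̄₁` itself solves `φ'' = f(φ)`. Hence, with `u = φ̄₁'`, the function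
`G(s) = u(κ(s))² / 2` is an antiderivative of `f` on `(0, Q)`, and `ψ'² / 2 - G(ψ)` is constant
along `ψ`. As `u` vanishes at the wall `t = 0`, `G(ψ)` tends to `0` at the left endpoint, so this
constant is nonnegative; since `G > 0` on `(0, Q)`, `ψ'` cannot vanish. By Darboux's theorem `ψ'`
then has one sign, which is positive because `ψ` lies above its boundary value.
-/

open Filter Topology

section AutonomousEquation

/-- The energy of a motion `ψ` with velocity `v` under the equation `ψ'' = G'(ψ)`. The potential
enters with a minus sign because `G` is an antiderivative of the force. -/
def mechanicalEnergy (G ψ v : ℝ → ℝ) (x : ℝ) : ℝ := v x ^ 2 / 2 - G (ψ x)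

variable {a b c x : ℝ} {G g ψ v : ℝ → ℝ}

lemma hasDerivAt_mechanicalEnergy_zero (hψ : HasDerivAt ψ (v x) x)
    (hv : HasDerivAt v (g (ψ x)) x) (hG : HasDerivAt G (g (ψ x)) (ψ x)) :
    HasDerivAt (mechanicalEnergy G ψ v) 0 x := by
  refine (((hv.pow 2).div_const 2).sub (hG.comp x hψ)).congr_deriv ?_
  push_cast
  ring

lemma mechanicalEnergy_eq_of_mem_Ioo (hψ : ∀ y ∈ Ioo a b, HasDerivAt ψ (v y) y)
    (hv : ∀ y ∈ Ioo a b, HasDerivAt v (g (ψ y)) y)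
    (hG : ∀ y ∈ Ioo a b, HasDerivAt G (g (ψ y)) (ψ y))
    {y : ℝ} (hx : x ∈ Ioo a b) (hy : y ∈ Ioo a b) :
    mechanicalEnergy G ψ v x = mechanicalEnergy G ψ v y := by
  have hE : ∀ z ∈ Ioo a b, HasDerivAt (mechanicalEnergy G ψ v) 0 z := fun z hz =>
    hasDerivAt_mechanicalEnergy_zero (hψ z hz) (hv z hz) (hG z hz)
  exact isOpen_Ioo.is_const_of_deriv_eq_zero isPreconnected_Ioo
    (fun z hz => (hE z hz).differentiableAt.differentiableWithinAt)
    (fun z hz => (hE z hz).deriv) hx hy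

lemma neg_le_mechanicalEnergy_of_tendsto (hψ : ∀ y ∈ Ioo a b, HasDerivAt ψ (v y) y)
    (hv : ∀ y ∈ Ioo a b, HasDerivAt v (g (ψ y)) y)
    (hG : ∀ y ∈ Ioo a b, HasDerivAt G (g (ψ y)) (ψ y))
    (hGa : Tendsto (fun y => G (ψ y)) (𝓝[>] a) (𝓝 c)) (hx : x ∈ Ioo a b) :
    -c ≤ mechanicalEnergy G ψ v x := by
  refine le_of_tendsto hGa.neg ?_
  filter_upwards [Ioo_mem_nhdsGT (hx.1.trans hx.2)] with y hy
  calc -G (ψ y) ≤ mechanicalEnergy G ψ v y := by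
        unfold mechanicalEnergy
        linarith [sq_nonneg (v y)]
    _ = mechanicalEnergy G ψ v x := mechanicalEnergy_eq_of_mem_Ioo hψ hv hG hy hx

lemma velocity_ne_zero_of_lt_potential (hψ : ∀ y ∈ Ioo a b, HasDerivAt ψ (v y) y)
    (hv : ∀ y ∈ Ioo a b, HasDerivAt v (g (ψ y)) y)
    (hG : ∀ y ∈ Ioo a b, HasDerivAt G (g (ψ y)) (ψ y))
    (hGa : Tendsto (fun y => G (ψ y)) (𝓝[>] a) (𝓝 c)) (hx : x ∈ Ioo a b)
    (hc : c < G (ψ x)) : v x ≠ 0 := by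
  intro hvx
  have hE := neg_le_mechanicalEnergy_of_tendsto hψ hv hG hGa hx
  simp only [mechanicalEnergy, hvx] at hE
  linarith

lemma hasDerivAt_pos_of_forall_ne_zero (hcont : ContinuousOn ψ (Ico a b))
    (hψ : ∀ y ∈ Ioo a b, HasDerivAt ψ (v y) y) (hv : ∀ y ∈ Ioo a b, v y ≠ 0)
    (hx : x ∈ Ioo a b) (hax : ψ a < ψ x) : ∀ y ∈ Ioo a b, 0 < v y := by
  refine (hasDerivWithinAt_forall_lt_or_forall_gt_of_forall_ne (convex_Ioo a b)
    (fun y hy => (hψ y hy).hasDerivWithinAt) hv).resolve_left fun hneg => ?_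
  have hanti : StrictAntiOn ψ (Ico a b) := by
    refine strictAntiOn_of_deriv_neg (convex_Ico a b) hcont fun y hy => ?_
    rw [interior_Ico] at hy
    exact (hψ y hy).deriv.trans_lt (hneg y hy)
  exact hax.not_gt <| hanti (left_mem_Ico.2 (hx.1.trans hx.2)) (Ioo_subset_Ico_self hx) hx.1

theorem velocity_pos_of_lt_potential (hcont : ContinuousOn ψ (Ico a b))
    (hψ : ∀ y ∈ Ioo a b, HasDerivAt ψ (v y) y)
    (hv : ∀ y ∈ Ioo a b, HasDerivAt v (g (ψ y)) y)
    (hG : ∀ y ∈ Ioo a b, HasDerivAt G (g (ψ y)) (ψ y))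
    (hGa : Tendsto (fun y => G (ψ y)) (𝓝[>] a) (𝓝 c)) (hc : ∀ y ∈ Ioo a b, c < G (ψ y))
    (hx : x ∈ Ioo a b) (hax : ψ a < ψ x) : 0 < v x :=
  hasDerivAt_pos_of_forall_ne_zero hcont hψ
    (fun y hy => velocity_ne_zero_of_lt_potential hψ hv hG hGa hy (hc y hy)) hx hax x hx

end AutonomousEquation

-- The factor `κ' = 1 / u` cancels one `u` in the derivative of `u(κ)² / 2`.
lemma hasDerivAt_half_sq_comp_of_leftInverse {φ u κ : ℝ → ℝ} {t w : ℝ}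
    (hφ : HasStrictDerivAt φ (u t) t) (hu : HasDerivAt u w t) (hut : u t ≠ 0)
    (hκ : ∀ᶠ r in 𝓝 t, κ (φ r) = r) :
    HasDerivAt (fun s => u (κ s) ^ 2 / 2) w (φ t) := by
  have hκ' : HasDerivAt κ (u t)⁻¹ (φ t) := (hφ.to_local_left_inverse hut hκ).hasDerivAt
  have hκt : κ (φ t) = t := hκ.self_of_nhds
  have huκ : HasDerivAt (fun s => u (κ s)) (w * (u t)⁻¹) (φ t) :=
    HasDerivAt.comp (φ t) (hκt.symm ▸ hu) hκ'
  refine ((huκ.pow 2).div_const 2).congr_deriv ?_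
  simp only [hκt]
  field_simp
  push_cast
  ring

section Poiseuille

/-- The stream function `φ̄₁` of the Poiseuille flow of flux `Q` in the channel `[0, 1]`. -/
def poiseuilleStream (Q t : ℝ) : ℝ := Q * (3 * t ^ 2 - 2 * t ^ 3)

/-- The velocity profile `φ̄₁'` of the Poiseuille flow of flux `Q`. -/
def poiseuilleVelocity (Q t : ℝ) : ℝ := 6 * Q * (t * (1 - t))

/-- The antiderivative of `s ↦ 6Q(1 - 2κ(s))` on `(0, Q)` that vanishes at `0`: the kinetic energy
density of the Poiseuille flow on the streamline `s`, where `κ` inverts the stream function. -/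
def poiseuillePotential (Q : ℝ) (κ : ℝ → ℝ) (s : ℝ) : ℝ := poiseuilleVelocity Q (κ s) ^ 2 / 2

variable {Q s t : ℝ} {κ : ℝ → ℝ}

lemma hasStrictDerivAt_poiseuilleStream (Q t : ℝ) :
    HasStrictDerivAt (poiseuilleStream Q) (poiseuilleVelocity Q t) t := by
  refine ((((hasStrictDerivAt_pow 2 t).const_mul 3).sub
    ((hasStrictDerivAt_pow 3 t).const_mul 2)).const_mul Q).congr_deriv ?_
  simp only [poiseuilleVelocity]
  push_cast
  ring

lemma hasDerivAt_poiseuilleVelocity (Q t : ℝ) :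
    HasDerivAt (poiseuilleVelocity Q) (6 * Q * (1 - 2 * t)) t := by
  refine (((hasDerivAt_id t).mul ((hasDerivAt_id t).const_sub 1)).const_mul (6 * Q)).congr_deriv ?_
  simp only [id]
  ring

lemma poiseuilleVelocity_pos (hQ : 0 < Q) (ht : t ∈ Ioo (0 : ℝ) 1) :
    0 < poiseuilleVelocity Q t :=
  mul_pos (by positivity) (mul_pos ht.1 (sub_pos.2 ht.2))

lemma poiseuilleVelocity_sq_le (Q : ℝ) (ht : t ∈ Icc (0 : ℝ) 1) :
    poiseuilleVelocity Q t ^ 2 ≤ 36 * Q * poiseuilleStream Q t := by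
  have h : (1 - t) ^ 2 ≤ 3 - 2 * t := by nlinarith [ht.1, ht.2]
  calc poiseuilleVelocity Q t ^ 2 = 36 * (Q * t) ^ 2 * (1 - t) ^ 2 := by
        unfold poiseuilleVelocity
        ring
    _ ≤ 36 * (Q * t) ^ 2 * (3 - 2 * t) := by gcongr
    _ = 36 * Q * poiseuilleStream Q t := by
        unfold poiseuilleStream
        ring

lemma surjOn_poiseuilleStream (Q : ℝ) : SurjOn (poiseuilleStream Q) (Ioo 0 1) (Ioo 0 Q) := by
  have hcont : ContinuousOn (poiseuilleStream Q) (Icc 0 1) := fun t _ =>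
    (hasStrictDerivAt_poiseuilleStream Q t).hasDerivAt.continuousAt.continuousWithinAt
  have h0 : poiseuilleStream Q 0 = 0 := by norm_num [poiseuilleStream]
  have h1 : poiseuilleStream Q 1 = Q := by norm_num [poiseuilleStream]
  simpa only [SurjOn, h0, h1] using intermediate_value_Ioo zero_le_one hcont

lemma hasDerivAt_poiseuillePotential (hκ : LeftInvOn κ (poiseuilleStream Q) (Ioo 0 1))
    (hs : s ∈ Ioo 0 Q) : HasDerivAt (poiseuillePotential Q κ) (6 * Q * (1 - 2 * κ s)) s := by
  obtain ⟨t, ht, rfl⟩ := surjOn_poiseuilleStream Q hs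
  rw [hκ ht]
  exact hasDerivAt_half_sq_comp_of_leftInverse (hasStrictDerivAt_poiseuilleStream Q t)
    (hasDerivAt_poiseuilleVelocity Q t) (poiseuilleVelocity_pos (hs.1.trans hs.2) ht).ne'
    (mem_of_superset (Ioo_mem_nhds ht.1 ht.2) hκ)

lemma poiseuillePotential_pos (hκ : LeftInvOn κ (poiseuilleStream Q) (Ioo 0 1))
    (hs : s ∈ Ioo 0 Q) : 0 < poiseuillePotential Q κ s := by
  obtain ⟨t, ht, rfl⟩ := surjOn_poiseuilleStream Q hs
  have hu := poiseuilleVelocity_pos (hs.1.trans hs.2) ht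
  rw [poiseuillePotential, hκ ht]
  positivity

lemma poiseuillePotential_le (hκ : LeftInvOn κ (poiseuilleStream Q) (Ioo 0 1))
    (hs : s ∈ Ioo 0 Q) : poiseuillePotential Q κ s ≤ 18 * Q * s := by
  obtain ⟨t, ht, rfl⟩ := surjOn_poiseuilleStream Q hs
  rw [poiseuillePotential, hκ ht]
  linarith [poiseuilleVelocity_sq_le Q (Ioo_subset_Icc_self ht)]

lemma tendsto_poiseuillePotential_comp {α : Type*} {l : Filter α} {ψ : α → ℝ}
    (hκ : LeftInvOn κ (poiseuilleStream Q) (Ioo 0 1)) (hψ : Tendsto ψ l (𝓝 0))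
    (hmem : ∀ᶠ x in l, ψ x ∈ Ioo 0 Q) :
    Tendsto (fun x => poiseuillePotential Q κ (ψ x)) l (𝓝 0) := by
  have hbound : Tendsto (fun x => 18 * Q * ψ x) l (𝓝 0) := by simpa using hψ.const_mul (18 * Q)
  exact squeeze_zero' (hmem.mono fun x hx => (poiseuillePotential_pos hκ hx).le)
    (hmem.mono fun x hx => poiseuillePotential_le hκ hx) hbound

end Poiseuille

theorem stmt4_general {Q d : ℝ} {κ f ψ : ℝ → ℝ}
    (hκ : ∀ t ∈ Icc (0 : ℝ) 1, κ (Q * (3 * t ^ 2 - 2 * t ^ 3)) = t)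
    (hf : ∀ s, f s = 6 * Q * (1 - 2 * κ s))
    (hcont : ContinuousOn ψ (Ico 0 d)) (hdiff : DifferentiableOn ℝ ψ (Ioo 0 d))
    (hdiff' : DifferentiableOn ℝ (deriv ψ) (Ioo 0 d))
    (hode : ∀ x ∈ Ioo 0 d, deriv (deriv ψ) x = f (ψ x))
    (h0 : ψ 0 = 0) (hb : ∀ x ∈ Ioo 0 d, ψ x ∈ Ioo 0 Q) :
    ∀ x ∈ Ioo 0 d, 0 < deriv ψ x := by
  intro x hx
  have hd : 0 < d := hx.1.trans hx.2
  have hinv : LeftInvOn κ (poiseuilleStream Q) (Ioo 0 1) := fun t ht =>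
    hκ t (Ioo_subset_Icc_self ht)
  have hlim : Tendsto ψ (𝓝[>] 0) (𝓝 0) := by
    rw [← nhdsWithin_Ioo_eq_nhdsGT hd]
    simpa only [ContinuousWithinAt, h0] using
      (hcont 0 (left_mem_Ico.2 hd)).mono Ioo_subset_Ico_self
  refine velocity_pos_of_lt_potential (g := f) (G := poiseuillePotential Q κ) hcont
    (fun y hy => (hdiff.differentiableAt (isOpen_Ioo.mem_nhds hy)).hasDerivAt)
    (fun y hy => hode y hy ▸ (hdiff'.differentiableAt (isOpen_Ioo.mem_nhds hy)).hasDerivAt)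
    (fun y hy => hf (ψ y) ▸ hasDerivAt_poiseuillePotential hinv (hb y hy))
    (tendsto_poiseuillePotential_comp hinv hlim ?_)
    (fun y hy => poiseuillePotential_pos hinv (hb y hy)) hx (h0.trans_lt (hb x hx).1)
  exact mem_of_superset (Ioo_mem_nhdsGT hd) hb

/-- Monotonicity of one-dimensional solutions: if `ψ ∈ C²((0,d)) ∩ C¹([0,d])` solves
`ψ'' = f(ψ)` on `(0,d)` with `ψ(0) = 0` and `0 < ψ < Q` on `(0,d)`, then `ψ' > 0`
on `(0,d)`. Here `f(s) = 6Q(1−2κ(s))` with `κ` the inverse of `t ↦ Q(3t²−2t³)`. -/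
theorem stmt4
    (Q : ℝ) (hQ : 0 < Q)
    (κ : ℝ → ℝ) (hκ : ∀ t ∈ Set.Icc (0 : ℝ) 1, κ (Q * (3 * t ^ 2 - 2 * t ^ 3)) = t)
    (f : ℝ → ℝ) (hf : ∀ s : ℝ, f s = 6 * Q * (1 - 2 * κ s))
    (d : ℝ) (hd : d ∈ Set.Ioc (0 : ℝ) 1)
    (ψ : ℝ → ℝ)
    (hC1 : ContDiffOn ℝ 1 ψ (Set.Icc 0 d))
    (hC2 : ContDiffOn ℝ 2 ψ (Set.Ioo 0 d))
    (hode : ∀ x ∈ Set.Ioo (0 : ℝ) d, deriv (deriv ψ) x = f (ψ x))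
    (h0 : ψ 0 = 0)
    (hb : ∀ x ∈ Set.Ioo (0 : ℝ) d, 0 < ψ x ∧ ψ x < Q) :
    ∀ x ∈ Set.Ioo (0 : ℝ) d, 0 < deriv ψ x :=
  stmt4_general hκ hf (hC1.continuousOn.mono Ico_subset_Icc_self)
    (hC2.differentiableOn two_ne_zero)
    ((hC2.deriv_of_isOpen isOpen_Ioo (by norm_num)).differentiableOn one_ne_zero) hode h0 hb
end
end

section
/- Let c₁>c₂≥0 and suppose that for i=1,2 there exist dᵢ∈(0,1] and functions φ_{cᵢ}∈C²((0,dᵢ))∩C¹([0,dᵢ]) with φ_{cᵢ}''(x₂)=f(φ_{cᵢ}(x₂)) on (0,dᵢ), φ_{cᵢ}(0)=0 and φ_{cᵢ}'(0)=cᵢ. Set d=min{d₁,d₂} and assume 0<φ_{cᵢ}(x₂)<Q for all x₂∈(0,d) and i=1,2. Then φ_{c₁}(x₂)>φ_{c₂}(x₂) for all x₂∈(0,d). -/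
open Real Set MeasureTheory

noncomputable section

/-!
A solution of `φ'' = f(φ)` conserves energy: `φ'(t)² = φ'(0)² + 2 F(φ(t))` with `F(s) = ∫₀ˢ f`.
If `F ≥ 0` and `φ'(0) > 0`, then `φ'` never vanishes, hence stays positive. At a point where the
graphs of two solutions meet the potential terms agree, so the solution with the larger initial
speed has the larger derivative there, and the other one can never catch up with it.

For `f(s) = 6Q(1 - 2κ(s))`, the substitution `s = Q(3t² - 2t³)` gives
`F(s) = ∫₀ᵗ 6Q(1 - 2τ) · 6Qτ(1 - τ) dτ = 18Q²(t(1 - t))² ≥ 0`.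
-/

theorem continuousOn_image_of_leftInvOn_of_isCompact {X Y : Type*} [TopologicalSpace X]
    [TopologicalSpace Y] [T2Space Y] {g : X → Y} {g' : Y → X} {K : Set X} (hK : IsCompact K)
    (hg : ContinuousOn g K) (hg' : LeftInvOn g' g K) : ContinuousOn g' (g '' K) := by
  refine continuousOn_iff_isClosed.2 fun t ht => ⟨g '' (t ∩ K), ?_, ?_⟩
  · exact ((hK.inter_left ht).image_of_continuousOn (hg.mono inter_subset_right)).isClosed
  · rw [hg'.image_inter', inter_assoc, inter_self]

theorem mapsTo_Icc_of_mapsTo_Ioo {X Y : Type*} [TopologicalSpace X] [LinearOrder X]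
    [OrderTopology X] [DenselyOrdered X] [TopologicalSpace Y] [Preorder Y] [OrderClosedTopology Y]
    {φ : X → Y} {a b : X} {p q : Y} (hab : a < b) (hφ : ContinuousOn φ (Icc a b))
    (h : MapsTo φ (Ioo a b) (Ioo p q)) : MapsTo φ (Icc a b) (Icc p q) := by
  rw [← closure_Ioo hab.ne] at hφ ⊢
  exact (h.closure_of_continuousOn hφ).mono_right
    (closure_minimal Ioo_subset_Icc_self isClosed_Icc)

theorem lt_of_hasDerivWithinAt_lt_of_eq {F F' G G' : ℝ → ℝ} {a b : ℝ}
    (hF : ∀ t ∈ Icc a b, HasDerivWithinAt F (F' t) (Icc a b) t)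
    (hG : ∀ t ∈ Icc a b, HasDerivWithinAt G (G' t) (Icc a b) t)
    (ha : F a ≤ G a) (hlt : ∀ t ∈ Ico a b, F t = G t → F' t < G' t) :
    ∀ t ∈ Ioo a b, F t < G t := by
  have hright {H H' : ℝ → ℝ} (hH : ∀ t ∈ Icc a b, HasDerivWithinAt H (H' t) (Icc a b) t) :
      ∀ t ∈ Ico a b, HasDerivWithinAt H (H' t) (Ici t) t := fun t ht =>
    (hH t (Ico_subset_Icc_self ht)).mono_of_mem_nhdsWithin (Icc_mem_nhdsGE_of_mem ht)
  have hle : ∀ ⦃t⦄, t ∈ Icc a b → F t ≤ G t :=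
    image_le_of_deriv_right_lt_deriv_boundary' (fun t ht => (hF t ht).continuousWithinAt)
      (hright hF) ha (fun t ht => (hG t ht).continuousWithinAt) (hright hG) hlt
  intro t ht
  refine (hle (Ioo_subset_Icc_self ht)).lt_of_ne fun heq => ?_
  have hnhds : Icc a b ∈ nhds t := Icc_mem_nhds ht.1 ht.2
  have hmin : IsLocalMin (G - F) t := by
    filter_upwards [hnhds] with u hu
    simpa [heq] using hle hu
  have hderiv : HasDerivAt (G - F) (G' t - F' t) t :=
    ((hG t (Ioo_subset_Icc_self ht)).hasDerivAt hnhds).sub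
      ((hF t (Ioo_subset_Icc_self ht)).hasDerivAt hnhds)
  exact (sub_pos.2 (hlt t (Ioo_subset_Ico_self ht) heq)).ne' (hmin.hasDerivAt_eq_zero hderiv)

/-- `φ` solves the autonomous equation `φ'' = f(φ)` on `[a, b]` with velocity `v = φ'`. The
velocity is part of the data, so that it makes sense at the end points, where the derivative of
`φ` is one-sided; the equation itself is only required in the open interval. -/
structure IsNewtonSolution (f φ v : ℝ → ℝ) (a b : ℝ) : Prop where
  hasDerivWithinAt : ∀ t ∈ Icc a b, HasDerivWithinAt φ (v t) (Icc a b) t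
  continuousOn_velocity : ContinuousOn v (Icc a b)
  hasDerivAt_velocity : ∀ t ∈ Ioo a b, HasDerivAt v (f (φ t)) t

theorem isNewtonSolution_of_contDiffOn {f φ : ℝ → ℝ} {a b : ℝ} (hab : a < b)
    (hC1 : ContDiffOn ℝ 1 φ (Icc a b)) (hC2 : ContDiffOn ℝ 2 φ (Ioo a b))
    (hode : ∀ t ∈ Ioo a b, deriv (deriv φ) t = f (φ t)) :
    IsNewtonSolution f φ (derivWithin φ (Icc a b)) a b where
  hasDerivWithinAt t ht := (hC1.differentiableOn one_ne_zero t ht).hasDerivWithinAt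
  continuousOn_velocity := hC1.continuousOn_derivWithin (uniqueDiffOn_Icc hab) le_rfl
  hasDerivAt_velocity t ht := by
    have hdiff : DifferentiableOn ℝ (deriv φ) (Ioo a b) :=
      (hC2.deriv_of_isOpen (m := 1) isOpen_Ioo (by norm_num)).differentiableOn one_ne_zero
    have hderiv : HasDerivAt (deriv φ) (f (φ t)) t :=
      hode t ht ▸ (hdiff.differentiableAt (Ioo_mem_nhds ht.1 ht.2)).hasDerivAt
    refine hderiv.congr_of_eventuallyEq ?_
    filter_upwards [Ioo_mem_nhds ht.1 ht.2] with u hu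
    exact derivWithin_of_mem_nhds (Icc_mem_nhds hu.1 hu.2)

namespace IsNewtonSolution

variable {f φ v φ₁ v₁ φ₂ v₂ : ℝ → ℝ} {a b c : ℝ} {S : Set ℝ}

theorem continuousOn (h : IsNewtonSolution f φ v a b) : ContinuousOn φ (Icc a b) :=
  fun t ht => (h.hasDerivWithinAt t ht).continuousWithinAt

theorem mono_right (h : IsNewtonSolution f φ v a b) (hcb : c ≤ b) :
    IsNewtonSolution f φ v a c where
  hasDerivWithinAt t ht :=
    (h.hasDerivWithinAt t (Icc_subset_Icc_right hcb ht)).mono (Icc_subset_Icc_right hcb)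
  continuousOn_velocity := h.continuousOn_velocity.mono (Icc_subset_Icc_right hcb)
  hasDerivAt_velocity t ht := h.hasDerivAt_velocity t (Ioo_subset_Ioo_right hcb ht)

theorem sq_velocity_right_eq_add_integral (h : IsNewtonSolution f φ v a b) (hab : a ≤ b)
    (hf : ContinuousOn f (φ '' Icc a b)) :
    v b ^ 2 = v a ^ 2 + 2 * ∫ s in φ a..φ b, f s := by
  have hpower : ContinuousOn (fun t => (f ∘ φ) t * v t) (Icc a b) :=
    (hf.comp h.continuousOn (mapsTo_image φ _)).mul h.continuousOn_velocity
  have hwork : ∫ t in a..b, (f ∘ φ) t * v t = ∫ s in φ a..φ b, f s := by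
    refine intervalIntegral.integral_comp_mul_deriv'' ?_ ?_ ?_ ?_ <;>
      simp only [uIcc_of_le hab, min_eq_left hab, max_eq_right hab]
    · exact h.continuousOn
    · exact fun t ht => ((h.hasDerivWithinAt t (Ioo_subset_Icc_self ht)).hasDerivAt
        (Icc_mem_nhds ht.1 ht.2)).hasDerivWithinAt
    · exact h.continuousOn_velocity
    · exact hf
  have hkinetic : ∫ t in a..b, (f ∘ φ) t * v t = v b ^ 2 / 2 - v a ^ 2 / 2 := by
    refine intervalIntegral.integral_eq_sub_of_hasDerivAt_of_le (f := fun t => v t ^ 2 / 2) hab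
      ((h.continuousOn_velocity.pow 2).div_const 2) (fun t ht => ?_)
      (hpower.intervalIntegrable_of_Icc hab)
    refine (((h.hasDerivAt_velocity t ht).pow 2).div_const 2).congr_deriv ?_
    simp only [Function.comp_apply]
    ring
  linarith

theorem sq_velocity_eq_add_integral (h : IsNewtonSolution f φ v a b) (hf : ContinuousOn f S)
    (hφ : MapsTo φ (Icc a b) S) {t : ℝ} (ht : t ∈ Icc a b) :
    v t ^ 2 = v a ^ 2 + 2 * ∫ s in φ a..φ t, f s :=
  (h.mono_right ht.2).sq_velocity_right_eq_add_integral ht.1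
    (hf.mono (hφ.mono_left (Icc_subset_Icc_right ht.2)).image_subset)

theorem velocity_pos (h : IsNewtonSolution f φ v a b) (hf : ContinuousOn f S)
    (hφ : MapsTo φ (Icc a b) S) (hF : ∀ s ∈ S, 0 ≤ ∫ u in φ a..s, f u) (hv : 0 < v a) :
    ∀ t ∈ Icc a b, 0 < v t := by
  intro t ht
  by_contra! hle
  obtain ⟨u, hu, hvu⟩ : ∃ u ∈ Icc a t, v u = 0 :=
    intermediate_value_Icc' ht.1 (h.continuousOn_velocity.mono (Icc_subset_Icc_right ht.2))
      ⟨hle, hv.le⟩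
  have hub : u ∈ Icc a b := Icc_subset_Icc_right ht.2 hu
  have henergy := h.sq_velocity_eq_add_integral hf hφ hub
  rw [hvu] at henergy
  linarith [hF _ (hφ hub), pow_pos hv 2]

theorem lt_of_abs_velocity_lt (h₁ : IsNewtonSolution f φ₁ v₁ a b)
    (h₂ : IsNewtonSolution f φ₂ v₂ a b) (hf : ContinuousOn f S)
    (hφ₁ : MapsTo φ₁ (Icc a b) S) (hφ₂ : MapsTo φ₂ (Icc a b) S)
    (hF : ∀ s ∈ S, 0 ≤ ∫ u in φ₁ a..s, f u) (ha : φ₂ a = φ₁ a) (hv : |v₂ a| < v₁ a) :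
    ∀ t ∈ Ioo a b, φ₂ t < φ₁ t := by
  refine lt_of_hasDerivWithinAt_lt_of_eq h₂.hasDerivWithinAt h₁.hasDerivWithinAt ha.le
    fun t ht heq => ?_
  have htb : t ∈ Icc a b := Ico_subset_Icc_self ht
  have hpos : 0 < v₁ t := h₁.velocity_pos hf hφ₁ hF ((abs_nonneg _).trans_lt hv) t htb
  refine lt_of_pow_lt_pow_left₀ 2 hpos.le ?_
  calc v₂ t ^ 2 = v₂ a ^ 2 + 2 * ∫ s in φ₁ a..φ₁ t, f s := by
        rw [h₂.sq_velocity_eq_add_integral hf hφ₂ htb, ha, heq]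
    _ < v₁ a ^ 2 + 2 * ∫ s in φ₁ a..φ₁ t, f s := by
        gcongr ?_ + _
        exact sq_lt_sq.2 (hv.trans_le (le_abs_self _))
    _ = v₁ t ^ 2 := (h₁.sq_velocity_eq_add_integral hf hφ₁ htb).symm

end IsNewtonSolution

/-- The solution `φ̄₁` of `φ'' = f(φ)` with zero initial velocity, which rises from `0` to `Q` on
`[0, 1]`. -/
def cubicProfile (Q t : ℝ) : ℝ := Q * (3 * t ^ 2 - 2 * t ^ 3)

theorem hasDerivAt_cubicProfile (Q t : ℝ) :
    HasDerivAt (cubicProfile Q) (6 * Q * (t * (1 - t))) t := by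
  refine ((((hasDerivAt_pow 2 t).const_mul 3).sub
    ((hasDerivAt_pow 3 t).const_mul 2)).const_mul Q).congr_deriv ?_
  push_cast
  ring

theorem continuous_cubicProfile (Q : ℝ) : Continuous (cubicProfile Q) :=
  continuous_iff_continuousAt.2 fun t => (hasDerivAt_cubicProfile Q t).continuousAt

theorem Icc_subset_image_cubicProfile (Q : ℝ) : Icc 0 Q ⊆ cubicProfile Q '' Icc 0 1 := by
  have h0 : cubicProfile Q 0 = 0 := by simp [cubicProfile]
  have h1 : cubicProfile Q 1 = Q := by norm_num [cubicProfile]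
  simpa only [h0, h1] using
    intermediate_value_Icc zero_le_one (continuous_cubicProfile Q).continuousOn

section CubicInverse

variable {Q : ℝ} {κ : ℝ → ℝ}

theorem continuousOn_force_of_leftInvOn (hκ : LeftInvOn κ (cubicProfile Q) (Icc 0 1)) :
    ContinuousOn (fun s => 6 * Q * (1 - 2 * κ s)) (cubicProfile Q '' Icc 0 1) := by
  have hcont : ContinuousOn κ (cubicProfile Q '' Icc 0 1) :=
    continuousOn_image_of_leftInvOn_of_isCompact isCompact_Icc
      (continuous_cubicProfile Q).continuousOn hκ
  fun_prop

theorem integral_force_cubicProfile (hκ : LeftInvOn κ (cubicProfile Q) (Icc 0 1)) {t : ℝ}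
    (ht : t ∈ Icc 0 1) :
    ∫ s in 0..cubicProfile Q t, 6 * Q * (1 - 2 * κ s) = 18 * Q ^ 2 * (t * (1 - t)) ^ 2 := by
  have hsub : uIcc 0 t ⊆ Icc 0 1 := by
    rw [uIcc_of_le ht.1]
    exact Icc_subset_Icc_right ht.2
  have hprimitive (τ : ℝ) : HasDerivAt (fun τ => 18 * Q ^ 2 * (τ * (1 - τ)) ^ 2)
      (6 * Q * (1 - 2 * τ) * (6 * Q * (τ * (1 - τ)))) τ := by
    refine ((((hasDerivAt_id' τ).mul ((hasDerivAt_id' τ).const_sub 1)).pow 2).const_mul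
      (18 * Q ^ 2)).congr_deriv ?_
    simp only [Pi.mul_apply]
    ring
  calc ∫ s in 0..cubicProfile Q t, 6 * Q * (1 - 2 * κ s)
      = ∫ s in cubicProfile Q 0..cubicProfile Q t, 6 * Q * (1 - 2 * κ s) := by
        simp [cubicProfile]
    _ = ∫ τ in 0..t, 6 * Q * (1 - 2 * κ (cubicProfile Q τ)) * (6 * Q * (τ * (1 - τ))) :=
        (intervalIntegral.integral_comp_mul_deriv' (fun τ _ => hasDerivAt_cubicProfile Q τ)
          (by fun_prop) ((continuousOn_force_of_leftInvOn hκ).mono (image_mono hsub))).symm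
    _ = ∫ τ in 0..t, 6 * Q * (1 - 2 * τ) * (6 * Q * (τ * (1 - τ))) :=
        intervalIntegral.integral_congr fun τ hτ => by simp only [hκ (hsub hτ)]
    _ = 18 * Q ^ 2 * (t * (1 - t)) ^ 2 := by
        rw [intervalIntegral.integral_eq_sub_of_hasDerivAt (fun τ _ => hprimitive τ)
          (Continuous.intervalIntegrable (by fun_prop) 0 t)]
        ring

theorem integral_force_nonneg (hκ : LeftInvOn κ (cubicProfile Q) (Icc 0 1)) {s : ℝ}
    (hs : s ∈ Icc 0 Q) : 0 ≤ ∫ u in 0..s, 6 * Q * (1 - 2 * κ u) := by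
  obtain ⟨t, ht, rfl⟩ := Icc_subset_image_cubicProfile Q hs
  rw [integral_force_cubicProfile hκ ht]
  positivity

end CubicInverse

theorem stmt5_general {Q : ℝ} {f : ℝ → ℝ} (hf : ContinuousOn f (Icc 0 Q))
    (hF : ∀ s ∈ Icc 0 Q, 0 ≤ ∫ u in 0..s, f u)
    {c₁ c₂ : ℝ} (hc : c₂ < c₁) (hc₂ : 0 ≤ c₂) {d₁ d₂ : ℝ} {φ₁ φ₂ : ℝ → ℝ}
    (hC1₁ : ContDiffOn ℝ 1 φ₁ (Icc 0 d₁)) (hC2₁ : ContDiffOn ℝ 2 φ₁ (Ioo 0 d₁))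
    (hode₁ : ∀ x ∈ Ioo 0 d₁, deriv (deriv φ₁) x = f (φ₁ x))
    (h0₁ : φ₁ 0 = 0) (hc₁' : derivWithin φ₁ (Icc 0 d₁) 0 = c₁)
    (hC1₂ : ContDiffOn ℝ 1 φ₂ (Icc 0 d₂)) (hC2₂ : ContDiffOn ℝ 2 φ₂ (Ioo 0 d₂))
    (hode₂ : ∀ x ∈ Ioo 0 d₂, deriv (deriv φ₂) x = f (φ₂ x))
    (h0₂ : φ₂ 0 = 0) (hc₂' : derivWithin φ₂ (Icc 0 d₂) 0 = c₂)
    (hb₁ : ∀ x ∈ Ioo 0 (min d₁ d₂), 0 < φ₁ x ∧ φ₁ x < Q)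
    (hb₂ : ∀ x ∈ Ioo 0 (min d₁ d₂), 0 < φ₂ x ∧ φ₂ x < Q) :
    ∀ x ∈ Ioo 0 (min d₁ d₂), φ₂ x < φ₁ x := by
  intro x hx
  have hd : 0 < min d₁ d₂ := hx.1.trans hx.2
  have hsol₁ := (isNewtonSolution_of_contDiffOn (hd.trans_le (min_le_left _ _))
    hC1₁ hC2₁ hode₁).mono_right (min_le_left d₁ d₂)
  have hsol₂ := (isNewtonSolution_of_contDiffOn (hd.trans_le (min_le_right _ _))
    hC1₂ hC2₂ hode₂).mono_right (min_le_right d₁ d₂)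
  refine hsol₁.lt_of_abs_velocity_lt hsol₂ hf (mapsTo_Icc_of_mapsTo_Ioo hd hsol₁.continuousOn hb₁)
    (mapsTo_Icc_of_mapsTo_Ioo hd hsol₂.continuousOn hb₂) ?_ (h0₂.trans h0₁.symm) ?_ x hx
  · rwa [h0₁]
  · rwa [hc₁', hc₂', abs_of_nonneg hc₂]

/-- Monotonicity in the initial slope: if `φ_{c₁}`, `φ_{c₂}` solve `φ'' = f(φ)` with
`φ(0) = 0`, `φ'(0) = cᵢ`, `c₁ > c₂ ≥ 0`, and both stay in `(0,Q)` on `(0,d)` with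
`d = min{d₁,d₂}`, then `φ_{c₁} > φ_{c₂}` on `(0,d)`. -/
theorem stmt5
    (Q : ℝ) (hQ : 0 < Q)
    (κ : ℝ → ℝ) (hκ : ∀ t ∈ Set.Icc (0 : ℝ) 1, κ (Q * (3 * t ^ 2 - 2 * t ^ 3)) = t)
    (f : ℝ → ℝ) (hf : ∀ s : ℝ, f s = 6 * Q * (1 - 2 * κ s))
    (c₁ c₂ : ℝ) (hc : c₂ < c₁) (hc₂ : 0 ≤ c₂)
    (d₁ d₂ : ℝ) (hd₁ : d₁ ∈ Set.Ioc (0 : ℝ) 1) (hd₂ : d₂ ∈ Set.Ioc (0 : ℝ) 1)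
    (φ₁ φ₂ : ℝ → ℝ)
    (hC1₁ : ContDiffOn ℝ 1 φ₁ (Set.Icc 0 d₁))
    (hC2₁ : ContDiffOn ℝ 2 φ₁ (Set.Ioo 0 d₁))
    (hode₁ : ∀ x ∈ Set.Ioo (0 : ℝ) d₁, deriv (deriv φ₁) x = f (φ₁ x))
    (h0₁ : φ₁ 0 = 0) (hc₁' : derivWithin φ₁ (Set.Icc 0 d₁) 0 = c₁)
    (hC1₂ : ContDiffOn ℝ 1 φ₂ (Set.Icc 0 d₂))
    (hC2₂ : ContDiffOn ℝ 2 φ₂ (Set.Ioo 0 d₂))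
    (hode₂ : ∀ x ∈ Set.Ioo (0 : ℝ) d₂, deriv (deriv φ₂) x = f (φ₂ x))
    (h0₂ : φ₂ 0 = 0) (hc₂' : derivWithin φ₂ (Set.Icc 0 d₂) 0 = c₂)
    (hb₁ : ∀ x ∈ Set.Ioo (0 : ℝ) (min d₁ d₂), 0 < φ₁ x ∧ φ₁ x < Q)
    (hb₂ : ∀ x ∈ Set.Ioo (0 : ℝ) (min d₁ d₂), 0 < φ₂ x ∧ φ₂ x < Q) :
    ∀ x ∈ Set.Ioo (0 : ℝ) (min d₁ d₂), φ₂ x < φ₁ x := by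
  obtain rfl : f = fun s => 6 * Q * (1 - 2 * κ s) := funext hf
  exact stmt5_general
    ((continuousOn_force_of_leftInvOn hκ).mono (Icc_subset_image_cubicProfile Q))
    (fun _ hs => integral_force_nonneg hκ hs) hc hc₂ hC1₁ hC2₁ hode₁ h0₁ hc₁'
    hC1₂ hC2₂ hode₂ h0₂ hc₂' hb₁ hb₂
end
end

section
/- For every c≥0 there exists δ>0 and a function φ_c∈C²((0,δ))∩C¹([0,δ]) with 0≤φ_c(x₂)<Q on [0,δ] such that φ_c''(x₂)=f(φ_c(x₂)) on (0,δ), φ_c(0)=0 and φ_c'(0)=c; moreover, this local solution is unique: if ψ̃∈C²((0,δ'))∩C¹([0,δ']) with 0≤ψ̃<Q satisfies the same initial value problem on some interval [0,δ'], then ψ̃ coincides with φ_c on [0,min{δ,δ'}] after possibly shrinking δ. -/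
open Real Set MeasureTheory

noncomputable section

/-!
Take the velocity `v = φ'` as the independent variable. Conservation of energy,
`v² - 2 F(φ) = c²` with `F' = f` and `F(0) = 0`, expresses the position through the velocity as
`φ = S(v) := F⁻¹((v² - c²) / 2)`, and the equation becomes the first-order autonomous equation
`v' = f(S(v))`. It has a continuous positive right-hand side as soon as `f` is continuous and
positive, which here holds near `0` because `f(0) = 6Q > 0`; so it is solved uniquely by
separation of variables, without any Lipschitz condition. Unlike `φ' = √(c² + 2 F(φ))`, this
reduction is not singular at `φ = 0` when `c = 0`.
-/

open Filter Topology

theorem eqOn_Icc_of_hasDerivAt_eq {u w g : ℝ → ℝ} {a b : ℝ} (hu : ContinuousOn u (Icc a b))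
    (hw : ContinuousOn w (Icc a b)) (hu' : ∀ x ∈ Ioo a b, HasDerivAt u (g x) x)
    (hw' : ∀ x ∈ Ioo a b, HasDerivAt w (g x) x) (ha : u a = w a) : EqOn u w (Icc a b) := by
  intro x hx
  have hd : ∀ y ∈ interior (Icc a b), HasDerivAt (u - w) 0 y := fun y hy => by
    rw [interior_Icc] at hy
    simpa only [sub_self] using (hu' y hy).sub (hw' y hy)
  have hdiff : DifferentiableOn ℝ (u - w) (interior (Icc a b)) := fun y hy =>
    (hd y hy).differentiableAt.differentiableWithinAt
  have hmono := monotoneOn_of_deriv_nonneg (convex_Icc a b) (hu.sub hw) hdiff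
    fun y hy => (hd y hy).deriv.ge
  have hanti := antitoneOn_of_deriv_nonpos (convex_Icc a b) (hu.sub hw) hdiff
    fun y hy => (hd y hy).deriv.le
  have ha' : a ∈ Icc a b := left_mem_Icc.2 (hx.1.trans hx.2)
  have hconst : (u - w) x = (u - w) a :=
    (hanti ha' hx hx.1).antisymm (hmono ha' hx hx.1)
  rwa [Pi.sub_apply, Pi.sub_apply, ha, sub_self, sub_eq_zero] at hconst

theorem surjective_of_le_deriv {G : ℝ → ℝ} {m : ℝ} (hm : 0 < m) (hG : Differentiable ℝ G)
    (hle : ∀ x, m ≤ deriv G x) : Function.Surjective G := by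
  have hgrowth := mul_sub_le_image_sub_of_le_deriv hG hle
  refine hG.continuous.surjective ?_ ?_
  · refine tendsto_atTop_mono' atTop ?_
      (tendsto_atTop_add_const_right atTop (G 0) (tendsto_id.const_mul_atTop hm))
    filter_upwards [eventually_ge_atTop 0] with x hx
    simp only [id]
    linarith [hgrowth hx]
  · refine tendsto_atBot_mono' atBot ?_
      (tendsto_atBot_add_const_right atBot (G 0) (tendsto_id.const_mul_atBot hm))
    filter_upwards [eventually_le_atBot 0] with x hx
    simp only [id]
    linarith [hgrowth hx]

theorem exists_orderIso_hasDerivAt {g : ℝ → ℝ} {m : ℝ} (hg : Continuous g) (hm : 0 < m)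
    (hle : ∀ x, m ≤ g x) (a : ℝ) : ∃ G : ℝ ≃o ℝ, G a = 0 ∧ ∀ x, HasDerivAt G (g x) x := by
  let G : ℝ → ℝ := fun x => ∫ t in a..x, g t
  have hG : ∀ x, HasDerivAt G (g x) x := fun x => (hg.integral_hasStrictDerivAt a x).hasDerivAt
  have hmono : StrictMono G := strictMono_of_deriv_pos fun x => by
    rw [(hG x).deriv]
    exact hm.trans_le (hle x)
  have hsurj : Function.Surjective G :=
    surjective_of_le_deriv hm (fun x => (hG x).differentiableAt) fun x => by
      rw [(hG x).deriv]
      exact hle x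
  exact ⟨hmono.orderIsoOfSurjective G hsurj, intervalIntegral.integral_same, hG⟩

/-- The pair `(φ, v)` solves the first-order system `φ' = v`, `v' = f(φ)` of the equation
`φ'' = f(φ)` on `s`, starting from `(a, c)` at time `0`. Only continuity is asked at the
boundary of `s`. -/
structure IsPhaseSolutionOn (f : ℝ → ℝ) (a c : ℝ) (s : Set ℝ) (φ v : ℝ → ℝ) : Prop where
  continuousOn_position : ContinuousOn φ s
  continuousOn_velocity : ContinuousOn v s
  hasDerivAt_position : ∀ x ∈ interior s, HasDerivAt φ (v x) x
  hasDerivAt_velocity : ∀ x ∈ interior s, HasDerivAt v (f (φ x)) x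
  position_zero : φ 0 = a
  velocity_zero : v 0 = c

namespace IsPhaseSolutionOn

variable {f g φ v : ℝ → ℝ} {a c δ : ℝ} {s t : Set ℝ}

theorem mono (h : IsPhaseSolutionOn f a c t φ v) (hst : s ⊆ t) :
    IsPhaseSolutionOn f a c s φ v where
  continuousOn_position := h.continuousOn_position.mono hst
  continuousOn_velocity := h.continuousOn_velocity.mono hst
  hasDerivAt_position x hx := h.hasDerivAt_position x (interior_mono hst hx)
  hasDerivAt_velocity x hx := h.hasDerivAt_velocity x (interior_mono hst hx)
  position_zero := h.position_zero
  velocity_zero := h.velocity_zero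

theorem congr (h : IsPhaseSolutionOn f a c s φ v) (hfg : ∀ x ∈ s, f (φ x) = g (φ x)) :
    IsPhaseSolutionOn g a c s φ v :=
  { h with
    hasDerivAt_velocity := fun x hx =>
      hfg x (interior_subset hx) ▸ h.hasDerivAt_velocity x hx }

theorem le_position (h : IsPhaseSolutionOn f a c (Icc 0 δ) φ v) (hc : 0 ≤ c)
    (hf : ∀ s, 0 ≤ f s) {x : ℝ} (hx : x ∈ Icc 0 δ) : a ≤ φ x := by
  have h0 : (0 : ℝ) ∈ Icc 0 δ := left_mem_Icc.2 (hx.1.trans hx.2)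
  have hv : MonotoneOn v (Icc 0 δ) := monotoneOn_of_deriv_nonneg (convex_Icc 0 δ)
    h.continuousOn_velocity
    (fun y hy => (h.hasDerivAt_velocity y hy).differentiableAt.differentiableWithinAt)
    fun y hy => (h.hasDerivAt_velocity y hy).deriv.symm ▸ hf _
  have hφ : MonotoneOn φ (Icc 0 δ) := monotoneOn_of_deriv_nonneg (convex_Icc 0 δ)
    h.continuousOn_position
    (fun y hy => (h.hasDerivAt_position y hy).differentiableAt.differentiableWithinAt)
    fun y hy => by
      have hy' := interior_subset hy
      rw [(h.hasDerivAt_position y hy).deriv]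
      exact (hc.trans_eq h.velocity_zero.symm).trans (hv h0 hy' hy'.1)
  exact h.position_zero.symm.trans_le (hφ h0 hx hx.1)

theorem velocity_sq_eq {F : ℝ → ℝ} (h : IsPhaseSolutionOn f a c (Icc 0 δ) φ v)
    (hF : ∀ s, HasDerivAt F (f s) s) (ha : F a = 0) {x : ℝ} (hx : x ∈ Icc 0 δ) :
    v x ^ 2 = c ^ 2 + 2 * F (φ x) := by
  have hFc : Continuous F := continuous_iff_continuousAt.2 fun s => (hF s).continuousAt
  have hφc := h.continuousOn_position
  refine eqOn_Icc_of_hasDerivAt_eq (u := fun x => v x ^ 2) (w := fun x => c ^ 2 + 2 * F (φ x))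
    (g := fun x => 2 * (f (φ x) * v x)) (h.continuousOn_velocity.pow 2) (by fun_prop) ?_ ?_ ?_ hx
  · intro y hy
    rw [← interior_Icc] at hy
    exact ((h.hasDerivAt_velocity y hy).pow 2).congr_deriv (by push_cast; ring)
  · intro y hy
    rw [← interior_Icc] at hy
    exact (((hF _).comp y (h.hasDerivAt_position y hy)).const_mul 2).const_add (c ^ 2)
  · simp only [h.velocity_zero, h.position_zero, ha, mul_zero, add_zero]

end IsPhaseSolutionOn

/-- Coordinates that integrate `φ'' = f(φ)`, `φ(0) = a`, `φ'(0) = c`: `F` is the primitive of `f`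
vanishing at `a`, and `T v` is the time at which a solution has velocity `v`, the position at that
time being `F⁻¹((v² - c²) / 2)`. -/
structure IsHodograph (f : ℝ → ℝ) (a c : ℝ) (F T : ℝ ≃o ℝ) : Prop where
  primitive_self : F a = 0
  hasDerivAt_primitive : ∀ s, HasDerivAt F (f s) s
  time_self : T c = 0
  hasDerivAt_time : ∀ v, HasDerivAt T (f (F.symm ((v ^ 2 - c ^ 2) / 2)))⁻¹ v

theorem exists_isHodograph {f : ℝ → ℝ} {m M : ℝ} (hf : Continuous f) (hm : 0 < m)
    (hbd : ∀ s, f s ∈ Icc m M) (a c : ℝ) : ∃ F T : ℝ ≃o ℝ, IsHodograph f a c F T := by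
  have hpos : ∀ s, 0 < f s := fun s => hm.trans_le (hbd s).1
  obtain ⟨F, hFa, hF⟩ := exists_orderIso_hasDerivAt hf hm (fun s => (hbd s).1) a
  have hcont : Continuous fun v : ℝ => (f (F.symm ((v ^ 2 - c ^ 2) / 2)))⁻¹ :=
    (hf.comp (F.symm.continuous.comp (by fun_prop))).inv₀ fun v => (hpos _).ne'
  obtain ⟨T, hTc, hT⟩ := exists_orderIso_hasDerivAt hcont
    (inv_pos.2 ((hpos 0).trans_le (hbd 0).2)) (fun v => inv_anti₀ (hpos _) (hbd _).2) c
  exact ⟨F, T, hFa, hF, hTc, hT⟩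

namespace IsHodograph

variable {f φ v : ℝ → ℝ} {a c δ : ℝ} {F T : ℝ ≃o ℝ}

theorem isPhaseSolutionOn (h : IsHodograph f a c F T) (hf : ∀ s, f s ≠ 0) :
    IsPhaseSolutionOn f a c univ (fun x => F.symm ((T.symm x ^ 2 - c ^ 2) / 2)) T.symm := by
  set S : ℝ → ℝ := fun v => F.symm ((v ^ 2 - c ^ 2) / 2)
  have hS : ∀ v, HasDerivAt S ((f (S v))⁻¹ * v) v := fun v => by
    have hinv : HasDerivAt F.symm (f (S v))⁻¹ ((v ^ 2 - c ^ 2) / 2) :=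
      (h.hasDerivAt_primitive (S v)).of_local_left_inverse F.symm.continuous.continuousAt (hf _)
        (.of_forall F.apply_symm_apply)
    have henergy : HasDerivAt (fun v : ℝ => (v ^ 2 - c ^ 2) / 2) v v :=
      (((hasDerivAt_pow 2 v).sub_const (c ^ 2)).div_const 2).congr_deriv (by norm_num)
    exact hinv.comp v henergy
  have hv : ∀ x, HasDerivAt T.symm (f (S (T.symm x))) x := fun x => by
    simpa only [inv_inv] using (h.hasDerivAt_time (T.symm x)).of_local_left_inverse
      T.symm.continuous.continuousAt (inv_ne_zero (hf _)) (.of_forall T.apply_symm_apply)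
  have hφ : ∀ x, HasDerivAt (fun x => S (T.symm x)) (T.symm x) x := fun x =>
    ((hS (T.symm x)).comp x (hv x)).congr_deriv (by field_simp [hf (S (T.symm x))])
  have hv0 : T.symm 0 = c := by rw [← h.time_self, T.symm_apply_apply]
  have hφ0 : S (T.symm 0) = a := by
    rw [hv0, OrderIso.symm_apply_eq, h.primitive_self, sub_self, zero_div]
  exact ⟨fun x _ => (hφ x).continuousAt.continuousWithinAt, T.symm.continuous.continuousOn,
    fun x _ => hφ x, fun x _ => hv x, hφ0, hv0⟩

theorem position_eq (h : IsHodograph f a c F T) (hs : IsPhaseSolutionOn f a c (Icc 0 δ) φ v)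
    {x : ℝ} (hx : x ∈ Icc 0 δ) : φ x = F.symm ((v x ^ 2 - c ^ 2) / 2) := by
  rw [OrderIso.eq_symm_apply, hs.velocity_sq_eq h.hasDerivAt_primitive h.primitive_self hx]
  ring

theorem velocity_eq (h : IsHodograph f a c F T) (hf : ∀ s, f s ≠ 0)
    (hs : IsPhaseSolutionOn f a c (Icc 0 δ) φ v) {x : ℝ} (hx : x ∈ Icc 0 δ) :
    v x = T.symm x := by
  rw [OrderIso.eq_symm_apply]
  refine eqOn_Icc_of_hasDerivAt_eq (u := fun x => T (v x)) (w := id) (g := fun _ => 1)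
    (T.continuous.comp_continuousOn hs.continuousOn_velocity) continuousOn_id (fun y hy => ?_)
    (fun y _ => hasDerivAt_id y) (by simp only [hs.velocity_zero, h.time_self, id]) hx
  have hT := h.hasDerivAt_time (v y)
  rw [← h.position_eq hs (Ioo_subset_Icc_self hy)] at hT
  rw [← interior_Icc] at hy
  exact (hT.comp y (hs.hasDerivAt_velocity y hy)).congr_deriv (inv_mul_cancel₀ (hf _))

end IsHodograph

theorem exists_isPhaseSolutionOn_univ {f : ℝ → ℝ} {m M : ℝ} (hf : Continuous f) (hm : 0 < m)
    (hbd : ∀ s, f s ∈ Icc m M) (a c : ℝ) : ∃ φ v, IsPhaseSolutionOn f a c univ φ v :=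
  have ⟨_, _, h⟩ := exists_isHodograph hf hm hbd a c
  ⟨_, _, h.isPhaseSolutionOn fun s => (hm.trans_le (hbd s).1).ne'⟩

theorem IsPhaseSolutionOn.eqOn {f φ v ψ w : ℝ → ℝ} {a c δ m M : ℝ} (hf : Continuous f)
    (hm : 0 < m) (hbd : ∀ s, f s ∈ Icc m M) (hφ : IsPhaseSolutionOn f a c (Icc 0 δ) φ v)
    (hψ : IsPhaseSolutionOn f a c (Icc 0 δ) ψ w) : EqOn φ ψ (Icc 0 δ) := fun x hx => by
  obtain ⟨F, T, h⟩ := exists_isHodograph hf hm hbd a c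
  have hf0 : ∀ s, f s ≠ 0 := fun s => (hm.trans_le (hbd s).1).ne'
  rw [h.position_eq hφ hx, h.position_eq hψ hx, h.velocity_eq hf0 hφ hx, h.velocity_eq hf0 hψ hx]

/-- `φ` is a solution of `φ'' = f(φ)`, `φ(0) = 0`, `φ'(0) = c` with values in `[0, Q)` and of class
`C¹([0, δ]) ∩ C²((0, δ))`. -/
structure IsLocalSolution (f : ℝ → ℝ) (Q c δ : ℝ) (φ : ℝ → ℝ) : Prop where
  contDiffOn_one : ContDiffOn ℝ 1 φ (Icc 0 δ)
  contDiffOn_two : ContDiffOn ℝ 2 φ (Ioo 0 δ)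
  mem_Ico : ∀ x ∈ Icc 0 δ, φ x ∈ Ico 0 Q
  deriv_deriv : ∀ x ∈ Ioo 0 δ, deriv (deriv φ) x = f (φ x)
  map_zero : φ 0 = 0
  derivWithin_zero : derivWithin φ (Icc 0 δ) 0 = c

theorem IsLocalSolution.isPhaseSolutionOn {f φ : ℝ → ℝ} {Q c δ : ℝ} (hδ : 0 < δ)
    (h : IsLocalSolution f Q c δ φ) :
    IsPhaseSolutionOn f 0 c (Icc 0 δ) φ (derivWithin φ (Icc 0 δ)) where
  continuousOn_position := h.contDiffOn_one.continuousOn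
  continuousOn_velocity :=
    h.contDiffOn_one.continuousOn_derivWithin (uniqueDiffOn_Icc hδ) le_rfl
  hasDerivAt_position x hx :=
    (h.contDiffOn_one.differentiableOn one_ne_zero x
      (interior_subset hx)).hasDerivWithinAt.hasDerivAt (mem_interior_iff_mem_nhds.1 hx)
  hasDerivAt_velocity x hx := by
    rw [interior_Icc] at hx
    have hd : HasDerivAt (deriv φ) (f (φ x)) x := h.deriv_deriv x hx ▸
      ((h.contDiffOn_two.deriv_of_isOpen isOpen_Ioo one_add_one_eq_two.le).differentiableOn
        one_ne_zero |>.differentiableAt (Ioo_mem_nhds hx.1 hx.2)).hasDerivAt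
    refine hd.congr_of_eventuallyEq ?_
    filter_upwards [Ioo_mem_nhds hx.1 hx.2] with y hy using
      derivWithin_of_mem_nhds (Icc_mem_nhds hy.1 hy.2)
  position_zero := h.map_zero
  velocity_zero := h.derivWithin_zero

theorem IsPhaseSolutionOn.isLocalSolution {f g φ v : ℝ → ℝ} {Q c δ : ℝ} (hδ : 0 < δ)
    (hg : Continuous g) (h : IsPhaseSolutionOn g 0 c univ φ v)
    (hmem : ∀ x ∈ Icc 0 δ, φ x ∈ Ico 0 Q) (hgf : ∀ x ∈ Icc 0 δ, g (φ x) = f (φ x)) :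
    IsLocalSolution f Q c δ φ := by
  have hφ : ∀ x, HasDerivAt φ (v x) x := by simpa using h.hasDerivAt_position
  have hv : ∀ x, HasDerivAt v (g (φ x)) x := by simpa using h.hasDerivAt_velocity
  have hφ' : deriv φ = v := funext fun x => (hφ x).deriv
  have hv' : deriv v = g ∘ φ := funext fun x => (hv x).deriv
  have hφd : Differentiable ℝ φ := fun x => (hφ x).differentiableAt
  have hv1 : ContDiff ℝ 1 v :=
    contDiff_one_iff_deriv.2 ⟨fun x => (hv x).differentiableAt, hv' ▸ hg.comp hφd.continuous⟩
  have hφ2 : ContDiff ℝ (1 + 1) φ := contDiff_succ_iff_deriv.2 ⟨hφd, by simp, hφ' ▸ hv1⟩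
  rw [one_add_one_eq_two] at hφ2
  refine ⟨(hφ2.of_le one_le_two).contDiffOn, hφ2.contDiffOn, hmem, fun x hx => ?_,
    h.position_zero, ?_⟩
  · rw [hφ', hv', Function.comp_apply, hgf x (Ioo_subset_Icc_self hx)]
  · rw [(hφ 0).hasDerivWithinAt.derivWithin (uniqueDiffOn_Icc hδ 0 (left_mem_Icc.2 hδ.le)),
      h.velocity_zero]

theorem exists_Icc_lt_of_continuousOn {φ : ℝ → ℝ} {δ b : ℝ} (hδ : 0 < δ)
    (hφ : ContinuousOn φ (Icc 0 δ)) (hb : φ 0 < b) :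
    ∃ ε > 0, ε ≤ δ ∧ ∀ x ∈ Icc 0 ε, φ x < b := by
  have hev : ∀ᶠ x in 𝓝[Icc 0 δ] 0, x ∈ Icc 0 δ ∧ φ x < b :=
    eventually_mem_nhdsWithin.and
      ((hφ 0 (left_mem_Icc.2 hδ.le)).eventually_lt_const hb)
  rw [nhdsWithin_Icc_eq_nhdsGE hδ] at hev
  obtain ⟨ε, hε, hsub⟩ := mem_nhdsGE_iff_exists_Icc_subset.1 hev
  exact ⟨ε, hε, (hsub (right_mem_Icc.2 (le_of_lt hε))).1.2, fun x hx => (hsub hx).2⟩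

theorem exists_continuous_eqOn_mem_Icc {f : ℝ → ℝ} {Q : ℝ} (hQ : 0 < Q)
    (hf : ContinuousOn f (Ico 0 Q)) (hf0 : 0 < f 0) :
    ∃ b ∈ Ioo 0 Q, ∃ g : ℝ → ℝ, Continuous g ∧ EqOn g f (Icc 0 b) ∧
      ∀ s, g s ∈ Icc (f 0 / 2) (2 * f 0) := by
  have hev : ∀ᶠ s in 𝓝[Ico 0 Q] 0, s ∈ Ico 0 Q ∧ f s ∈ Icc (f 0 / 2) (2 * f 0) :=
    eventually_mem_nhdsWithin.and ((hf 0 (left_mem_Ico.2 hQ)).eventually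
      (Icc_mem_nhds (by linarith) (by linarith)))
  rw [nhdsWithin_Ico_eq_nhdsGE hQ] at hev
  obtain ⟨b, hb, hsub⟩ := mem_nhdsGE_iff_exists_Icc_subset.1 hev
  have hb0 : 0 ≤ b := le_of_lt hb
  refine ⟨b, ⟨hb, (hsub (right_mem_Icc.2 hb0)).1.2⟩, IccExtend hb0 ((Icc 0 b).domRestrict f),
    ?_, fun s hs => IccExtend_of_mem hb0 _ hs, fun s => (hsub (projIcc 0 b hb0 s).2).2⟩
  exact continuous_IccExtend_iff.2 (hf.mono fun s hs => (hsub hs).1).domRestrict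

theorem continuousOn_image_of_leftInvOn {α β : Type*} [TopologicalSpace α] [TopologicalSpace β]
    [T2Space β] {g : α → β} {k : β → α} {s : Set α} (hs : IsCompact s) (hg : ContinuousOn g s)
    (hk : LeftInvOn k g s) : ContinuousOn k (g '' s) := by
  refine continuousOn_iff_isClosed.2 fun t ht => ⟨g '' (t ∩ s), ?_, ?_⟩
  · exact ((hs.inter_left ht).image_of_continuousOn (hg.mono inter_subset_right)).isClosed
  · rw [hk.image_inter', inter_assoc, inter_self]

theorem continuousOn_cubicProfile_inverse {Q : ℝ} {κ : ℝ → ℝ}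
    (hκ : ∀ t ∈ Icc (0 : ℝ) 1, κ (Q * (3 * t ^ 2 - 2 * t ^ 3)) = t) :
    ContinuousOn κ (Icc 0 Q) := by
  have hg : ContinuousOn (fun t : ℝ => Q * (3 * t ^ 2 - 2 * t ^ 3)) (Icc 0 1) := by fun_prop
  have hrange := intermediate_value_Icc zero_le_one hg
  refine (continuousOn_image_of_leftInvOn isCompact_Icc hg hκ).mono
    ((Icc_subset_Icc ?_ ?_).trans hrange) <;> norm_num

theorem continuousOn_of_cubicProfile_inverse {Q : ℝ} {κ f : ℝ → ℝ}
    (hκ : ∀ t ∈ Icc (0 : ℝ) 1, κ (Q * (3 * t ^ 2 - 2 * t ^ 3)) = t)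
    (hf : ∀ s, f s = 6 * Q * (1 - 2 * κ s)) : ContinuousOn f (Icc 0 Q) := by
  have hκc := continuousOn_cubicProfile_inverse hκ
  rw [funext hf]
  fun_prop

theorem pos_at_zero_of_cubicProfile_inverse {Q : ℝ} {κ f : ℝ → ℝ} (hQ : 0 < Q)
    (hκ : ∀ t ∈ Icc (0 : ℝ) 1, κ (Q * (3 * t ^ 2 - 2 * t ^ 3)) = t)
    (hf : ∀ s, f s = 6 * Q * (1 - 2 * κ s)) : 0 < f 0 := by
  have hκ0 : κ 0 = 0 := by simpa using hκ 0 (left_mem_Icc.2 zero_le_one)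
  rw [hf, hκ0]
  linarith

theorem stmt6_general {f : ℝ → ℝ} {Q c : ℝ} (hQ : 0 < Q) (hf : ContinuousOn f (Ico 0 Q))
    (hf0 : 0 < f 0) (hc : 0 ≤ c) :
    ∃ δ > 0, ∃ φ, IsLocalSolution f Q c δ φ ∧ ∀ δ' > 0, ∀ ψ, IsLocalSolution f Q c δ' ψ →
      ∃ δ'' > 0, δ'' ≤ min δ δ' ∧ EqOn ψ φ (Icc 0 δ'') := by
  obtain ⟨b, hb, g, hg, hgf, hbd⟩ := exists_continuous_eqOn_mem_Icc hQ hf hf0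
  have hm : 0 < f 0 / 2 := half_pos hf0
  obtain ⟨φ, v, hφ⟩ := exists_isPhaseSolutionOn_univ hg hm hbd 0 c
  obtain ⟨δ, hδ, -, hφb⟩ := exists_Icc_lt_of_continuousOn one_pos
    (hφ.continuousOn_position.mono (subset_univ _)) (hφ.position_zero.trans_lt hb.1)
  have hφ0 : ∀ x ∈ Icc 0 δ, 0 ≤ φ x := fun x hx =>
    (hφ.mono (subset_univ _)).le_position hc (fun s => hm.le.trans (hbd s).1) hx
  refine ⟨δ, hδ, φ, hφ.isLocalSolution hδ hg
    (fun x hx => ⟨hφ0 x hx, (hφb x hx).trans hb.2⟩)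
    fun x hx => hgf ⟨hφ0 x hx, (hφb x hx).le⟩, fun δ' hδ' ψ hψ => ?_⟩
  obtain ⟨ε, hε, hεδ', hψb⟩ := exists_Icc_lt_of_continuousOn hδ' hψ.contDiffOn_one.continuousOn
    (hψ.map_zero.trans_lt hb.1)
  have hsub : Icc 0 (min δ ε) ⊆ Icc 0 ε := Icc_subset_Icc_right (min_le_right _ _)
  have hsub' : Icc 0 ε ⊆ Icc 0 δ' := Icc_subset_Icc_right hεδ'
  have hψg := ((hψ.isPhaseSolutionOn hδ').mono hsub').congr fun x hx =>
    (hgf ⟨(hψ.mem_Ico x (hsub' hx)).1, (hψb x hx).le⟩).symm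
  exact ⟨min δ ε, lt_min hδ hε, min_le_min_left δ hεδ',
    (hψg.mono hsub).eqOn hg hm hbd (hφ.mono (subset_univ _))⟩

/-- Local existence and uniqueness for the (non-Lipschitz) initial value problem
`φ'' = f(φ)`, `φ(0) = 0`, `φ'(0) = c ≥ 0`, with `0 ≤ φ < Q`: there are `δ > 0` and
`φ_c ∈ C²((0,δ)) ∩ C¹([0,δ])` solving it, and any other solution of the same problem
on some `[0,δ']` coincides with `φ_c` on `[0,δ'']` for some `0 < δ'' ≤ min{δ,δ'}`. -/
theorem stmt6
    (Q : ℝ) (hQ : 0 < Q)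
    (κ : ℝ → ℝ) (hκ : ∀ t ∈ Set.Icc (0 : ℝ) 1, κ (Q * (3 * t ^ 2 - 2 * t ^ 3)) = t)
    (f : ℝ → ℝ) (hf : ∀ s : ℝ, f s = 6 * Q * (1 - 2 * κ s)) :
    ∀ c : ℝ, 0 ≤ c → ∃ δ > 0, ∃ φ : ℝ → ℝ,
      ContDiffOn ℝ 1 φ (Set.Icc 0 δ) ∧ ContDiffOn ℝ 2 φ (Set.Ioo 0 δ) ∧
      (∀ x ∈ Set.Icc (0 : ℝ) δ, 0 ≤ φ x ∧ φ x < Q) ∧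
      (∀ x ∈ Set.Ioo (0 : ℝ) δ, deriv (deriv φ) x = f (φ x)) ∧
      φ 0 = 0 ∧ derivWithin φ (Set.Icc 0 δ) 0 = c ∧
      (∀ δ' > 0, ∀ ψ : ℝ → ℝ,
        ContDiffOn ℝ 1 ψ (Set.Icc 0 δ') → ContDiffOn ℝ 2 ψ (Set.Ioo 0 δ') →
        (∀ x ∈ Set.Icc (0 : ℝ) δ', 0 ≤ ψ x ∧ ψ x < Q) →
        (∀ x ∈ Set.Ioo (0 : ℝ) δ', deriv (deriv ψ) x = f (ψ x)) →
        ψ 0 = 0 → derivWithin ψ (Set.Icc 0 δ') 0 = c →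
        ∃ δ'' > 0, δ'' ≤ min δ δ' ∧ ∀ x ∈ Set.Icc (0 : ℝ) δ'', ψ x = φ x) := by
  intro c hc
  obtain ⟨δ, hδ, φ, hφ, huniq⟩ := stmt6_general hQ
    ((continuousOn_of_cubicProfile_inverse hκ hf).mono Ico_subset_Icc_self)
    (pos_at_zero_of_cubicProfile_inverse hQ hκ hf) hc
  exact ⟨δ, hδ, φ, hφ.contDiffOn_one, hφ.contDiffOn_two, hφ.mem_Ico, hφ.deriv_deriv,
    hφ.map_zero, hφ.derivWithin_zero,
    fun δ' hδ' ψ h1 h2 hmem hode h0 hc' => huniq δ' hδ' ψ ⟨h1, h2, hmem, hode, h0, hc'⟩⟩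
end
end

section
/- Let ψ∈C²((0,1))∩C¹([0,1]) satisfy ψ''(x₂)=f(ψ(x₂)) for x₂∈(0,1), ψ(0)=0, ψ(1)=Q, and 0<ψ(x₂)<Q for all x₂∈(0,1). Then ψ(x₂)=Q(3x₂²−2x₂³) for all x₂∈[0,1]. -/
open Real Set MeasureTheory

noncomputable section

/-!
Both `ψ` and the cubic profile `φ` solve `u'' = f(u)`, and since `φ` increases from `0` to `Q` one
can write `ψ = φ ∘ τ` with `τ 0 = 0` and `τ 1 = 1`. Conservation of energy makes
`ψ'² - φ'(τ)²` constant, and the constant is nonnegative because `φ'` vanishes at the left endpoint.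
Hence `|ψ'| ≥ φ'(τ) > 0`, so `ψ' > 0` and `τ' = ψ' / φ'(τ) ≥ 1`; a map of `[0, 1]` with slope at
least `1` that fixes both endpoints is the identity. The argument asks for no regularity of `f`,
which matters because the `f` at hand is not Lipschitz at the endpoints of `[0, Q]`.
-/

open Filter Topology

section Reparametrization

lemma continuousOn_of_comp_of_injOn_of_isCompact {X Y Z : Type*} [TopologicalSpace X]
    [TopologicalSpace Y] [TopologicalSpace Z] [T2Space Z] {τ : X → Y} {φ : Y → Z} {s : Set X}
    {K : Set Y} (hK : IsCompact K) (hφ : ContinuousOn φ K) (hinj : InjOn φ K)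
    (hτ : MapsTo τ s K) (hφτ : ContinuousOn (φ ∘ τ) s) : ContinuousOn τ s := by
  have : CompactSpace K := isCompact_iff_compactSpace.mp hK
  have hind : IsInducing (K.domRestrict φ) :=
    (hφ.domRestrict.isClosedEmbedding hinj.injective).isInducing
  have hrestrict : Continuous (hτ.restrict τ s K) := hind.continuous_iff.mpr hφτ.domRestrict
  exact continuousOn_iff_continuous_domRestrict.mpr (continuous_subtype_val.comp hrestrict)

lemma exists_continuousOn_comp_eqOn {X : Type*} [TopologicalSpace X] {φ : ℝ → ℝ} {ψ : X → ℝ}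
    {a b : ℝ} {s : Set X} (hab : a ≤ b) (hφ : ContinuousOn φ (Icc a b))
    (hinj : InjOn φ (Icc a b)) (hψ : ContinuousOn ψ s) (hmaps : MapsTo ψ s (Icc (φ a) (φ b))) :
    ∃ τ : X → ℝ, ContinuousOn τ s ∧ MapsTo τ s (Icc a b) ∧ EqOn (φ ∘ τ) ψ s := by
  have hsurj : SurjOn φ (Icc a b) (Icc (φ a) (φ b)) := intermediate_value_Icc hab hφ
  let τ : X → ℝ := Function.invFunOn φ (Icc a b) ∘ ψ
  have hτ : MapsTo τ s (Icc a b) := hsurj.mapsTo_invFunOn.comp hmaps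
  have hφτ : EqOn (φ ∘ τ) ψ s := fun x hx => hsurj.rightInvOn_invFunOn (hmaps hx)
  exact ⟨τ, continuousOn_of_comp_of_injOn_of_isCompact isCompact_Icc hφ hinj hτ (hψ.congr hφτ),
    hτ, hφτ⟩

lemma exists_continuousOn_comp_eqOn_Icc {φ ψ : ℝ → ℝ} {a b c d : ℝ} (hab : a < b) (hcd : c < d)
    (hφ : ContinuousOn φ (Icc a b)) (hmono : StrictMonoOn φ (Icc a b))
    (hψ : ContinuousOn ψ (Icc c d)) (hc : ψ c = φ a) (hd : ψ d = φ b)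
    (hmaps : MapsTo ψ (Ioo c d) (Ioo (φ a) (φ b))) :
    ∃ τ : ℝ → ℝ, ContinuousOn τ (Icc c d) ∧ τ c = a ∧ τ d = b ∧
      MapsTo τ (Ioo c d) (Ioo a b) ∧ EqOn (φ ∘ τ) ψ (Icc c d) := by
  have ha_mem : a ∈ Icc a b := left_mem_Icc.mpr hab.le
  have hb_mem : b ∈ Icc a b := right_mem_Icc.mpr hab.le
  have hc_mem : c ∈ Icc c d := left_mem_Icc.mpr hcd.le
  have hd_mem : d ∈ Icc c d := right_mem_Icc.mpr hcd.le
  have hmaps_Icc : MapsTo ψ (Icc c d) (Icc (φ a) (φ b)) := by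
    have hφab : φ a < φ b := hmono ha_mem hb_mem hab
    simpa only [closure_Ioo hcd.ne, closure_Ioo hφab.ne] using
      hmaps.closure_of_continuousOn (by rwa [closure_Ioo hcd.ne])
  obtain ⟨τ, hτc, hτ, hφτ⟩ :=
    exists_continuousOn_comp_eqOn hab.le hφ hmono.injOn hψ hmaps_Icc
  refine ⟨τ, hτc, ?_, ?_, fun x hx => ?_, hφτ⟩
  · exact hmono.injOn (hτ hc_mem) ha_mem ((hφτ hc_mem).trans hc)
  · exact hmono.injOn (hτ hd_mem) hb_mem ((hφτ hd_mem).trans hd)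
  · have hx_mem : x ∈ Icc c d := Ioo_subset_Icc_self hx
    have hφx : φ (τ x) ∈ Ioo (φ a) (φ b) := by
      rw [show φ (τ x) = ψ x from hφτ hx_mem]
      exact hmaps hx
    exact ⟨(hmono.lt_iff_lt ha_mem (hτ hx_mem)).mp hφx.1,
      (hmono.lt_iff_lt (hτ hx_mem) hb_mem).mp hφx.2⟩

lemma hasDerivAt_of_comp_eventuallyEq {𝕜 : Type*} [NontriviallyNormedField 𝕜] {φ ψ τ : 𝕜 → 𝕜}
    {φ' ψ' x : 𝕜} (hτ : ContinuousAt τ x) (hφ : HasDerivAt φ φ' (τ x)) (hφ' : φ' ≠ 0)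
    (hψ : HasDerivAt ψ ψ' x) (hφτ : φ ∘ τ =ᶠ[𝓝 x] ψ) : HasDerivAt τ (ψ' / φ') x := by
  have hdslope : Tendsto (fun y => dslope φ (τ x) (τ y)) (𝓝[≠] x) (𝓝 φ') := by
    have hcont : ContinuousAt (dslope φ (τ x)) (τ x) :=
      continuousAt_dslope_same.mpr hφ.differentiableAt
    have := hcont.tendsto.comp (hτ.tendsto.mono_left nhdsWithin_le_nhds : Tendsto τ (𝓝[≠] x) _)
    rwa [dslope_same, hφ.deriv] at this
  rw [hasDerivAt_iff_tendsto_slope] at hψ ⊢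
  refine (hψ.div hdslope hφ').congr' ?_
  filter_upwards [hdslope.eventually_ne hφ', hφτ.filter_mono nhdsWithin_le_nhds]
    with y hy hφτy
  have hfactor : (τ y - τ x) * dslope φ (τ x) (τ y) = ψ y - ψ x := by
    rw [← smul_eq_mul, sub_smul_dslope, ← hφτy, ← hφτ.self_of_nhds]
    rfl
  rw [Pi.div_apply, slope_def_field, slope_def_field, ← hfactor]
  field_simp

end Reparametrization

section MeanValue

lemma deriv_pos_of_deriv_ne_zero_of_lt {u : ℝ → ℝ} {a b : ℝ} (hab : a < b)
    (hc : ContinuousOn u (Icc a b)) (hd : ∀ x ∈ Ioo a b, DifferentiableAt ℝ u x)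
    (hne : ∀ x ∈ Ioo a b, deriv u x ≠ 0) (hu : u a < u b) : ∀ x ∈ Ioo a b, 0 < deriv u x := by
  obtain ⟨ξ, hξ, hslope⟩ := exists_deriv_eq_slope u hab hc
    fun x hx => (hd x hx).differentiableWithinAt
  have hξ_pos : 0 < deriv u ξ := hslope ▸ div_pos (sub_pos.mpr hu) (sub_pos.mpr hab)
  exact (hasDerivWithinAt_forall_lt_or_forall_gt_of_forall_ne (convex_Ioo a b)
    (fun x hx => (hd x hx).hasDerivAt.hasDerivWithinAt) hne).resolve_left
      fun hneg => (hneg ξ hξ).not_gt hξ_pos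

lemma eqOn_id_of_one_le_deriv {τ : ℝ → ℝ} {a b : ℝ} (hc : ContinuousOn τ (Icc a b))
    (hd : DifferentiableOn ℝ τ (Ioo a b)) (hderiv : ∀ x ∈ Ioo a b, 1 ≤ deriv τ x)
    (ha : τ a = a) (hb : τ b = b) : EqOn τ id (Icc a b) := by
  intro x hx
  have hab : a ≤ b := hx.1.trans hx.2
  rw [← interior_Icc] at hd hderiv
  have hexpand := (convex_Icc a b).mul_sub_le_image_sub_of_le_deriv hc hd hderiv
  have hleft := hexpand a (left_mem_Icc.mpr hab) x hx hx.1
  have hright := hexpand x hx b (right_mem_Icc.mpr hab) hx.2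
  rw [id_eq]
  linarith

end MeanValue

/-- `u` is a twice differentiable solution of the autonomous equation `u'' = f(u)` at every point
of `s`. Derivatives are two-sided, so `s` is meant to be open. -/
def IsSolutionOn (f u : ℝ → ℝ) (s : Set ℝ) : Prop :=
  ∀ x ∈ s, DifferentiableAt ℝ u x ∧ HasDerivAt (deriv u) (f (u x)) x

namespace IsSolutionOn

lemma of_contDiffOn {f u : ℝ → ℝ} {s : Set ℝ} (hs : IsOpen s) (hu : ContDiffOn ℝ 2 u s)
    (hode : ∀ x ∈ s, deriv (deriv u) x = f (u x)) : IsSolutionOn f u s := by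
  intro x hx
  have hu' : ContDiffOn ℝ 1 (deriv u) s := hu.deriv_of_isOpen hs (by norm_num)
  refine ⟨(hu.differentiableOn two_ne_zero).differentiableAt (hs.mem_nhds hx), ?_⟩
  rw [← hode x hx]
  exact ((hu'.differentiableOn one_ne_zero).differentiableAt (hs.mem_nhds hx)).hasDerivAt

variable {f φ ψ τ : ℝ → ℝ} {s t : Set ℝ} {a b : ℝ}

lemma hasDerivAt_sq_deriv_sub_sq_deriv_comp (hφ : IsSolutionOn f φ t) (hψ : IsSolutionOn f ψ s)
    (hs : IsOpen s) (hτ : DifferentiableOn ℝ τ s) (hmaps : MapsTo τ s t) (hφτ : EqOn (φ ∘ τ) ψ s)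
    {x : ℝ} (hx : x ∈ s) :
    HasDerivAt (fun y => deriv ψ y ^ 2 - deriv φ (τ y) ^ 2) 0 x := by
  obtain ⟨hφd, hφdd⟩ := hφ (τ x) (hmaps hx)
  have hτd : HasDerivAt τ (deriv τ x) x := (hτ.differentiableAt (hs.mem_nhds hx)).hasDerivAt
  have hchain : deriv ψ x = deriv φ (τ x) * deriv τ x := by
    rw [← (hφτ.eventuallyEq_of_mem (hs.mem_nhds hx)).deriv_eq]
    exact (hφd.hasDerivAt.comp x hτd).deriv
  have hvalue : ψ x = φ (τ x) := (hφτ hx).symm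
  refine (((hψ x hx).2.pow 2).sub ((hφdd.comp x hτd).pow 2)).congr_deriv ?_
  simp only [Function.comp_apply, hchain, hvalue]
  ring

lemma sq_deriv_comp_le_sq_deriv (hφ : IsSolutionOn f φ t) (hψ : IsSolutionOn f ψ (Ioo a b))
    (hτ : DifferentiableOn ℝ τ (Ioo a b)) (hmaps : MapsTo τ (Ioo a b) t)
    (hφτ : EqOn (φ ∘ τ) ψ (Ioo a b)) (hlim : Tendsto (fun x => deriv φ (τ x)) (𝓝[>] a) (𝓝 0))
    {x : ℝ} (hx : x ∈ Ioo a b) : deriv φ (τ x) ^ 2 ≤ deriv ψ x ^ 2 := by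
  have henergy {y : ℝ} (hy : y ∈ Ioo a b) :=
    hasDerivAt_sq_deriv_sub_sq_deriv_comp hφ hψ isOpen_Ioo hτ hmaps hφτ hy
  obtain ⟨c, hc⟩ := isOpen_Ioo.exists_is_const_of_deriv_eq_zero isPreconnected_Ioo
    (fun y hy => (henergy hy).differentiableAt.differentiableWithinAt)
    (fun y hy => (henergy hy).deriv)
  have hc_nonneg : 0 ≤ c := by
    have hlim_sq : Tendsto (fun y => -deriv φ (τ y) ^ 2) (𝓝[>] a) (𝓝 0) := by
      simpa using (hlim.pow 2).neg
    refine le_of_tendsto hlim_sq ?_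
    filter_upwards [Ioo_mem_nhdsGT (hx.1.trans hx.2)] with y hy
    linarith [hc y hy, sq_nonneg (deriv ψ y)]
  linarith [hc x hx]

end IsSolutionOn

theorem stmt7_general {f φ ψ : ℝ → ℝ} {a b : ℝ} (hab : a < b)
    (hφc : ContinuousOn φ (Icc a b)) (hφ : IsSolutionOn f φ (Ioo a b))
    (hφ_pos : ∀ t ∈ Ioo a b, 0 < deriv φ t) (hφ_lim : Tendsto (deriv φ) (𝓝[>] a) (𝓝 0))
    (hψc : ContinuousOn ψ (Icc a b)) (hψ : IsSolutionOn f ψ (Ioo a b))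
    (ha : ψ a = φ a) (hb : ψ b = φ b) (hmaps : MapsTo ψ (Ioo a b) (Ioo (φ a) (φ b))) :
    EqOn ψ φ (Icc a b) := by
  have hmono : StrictMonoOn φ (Icc a b) :=
    strictMonoOn_of_deriv_pos (convex_Icc a b) hφc (by rwa [interior_Icc])
  obtain ⟨τ, hτc, hτa, hτb, hτ_maps, hφτ⟩ :=
    exists_continuousOn_comp_eqOn_Icc hab hab hφc hmono hψc ha hb hmaps
  have hτ_deriv : ∀ x ∈ Ioo a b, HasDerivAt τ (deriv ψ x / deriv φ (τ x)) x := fun x hx =>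
    have hx_nhds : Icc a b ∈ 𝓝 x := Icc_mem_nhds hx.1 hx.2
    hasDerivAt_of_comp_eventuallyEq (hτc.continuousAt hx_nhds) (hφ _ (hτ_maps hx)).1.hasDerivAt
      (hφ_pos _ (hτ_maps hx)).ne' (hψ x hx).1.hasDerivAt (hφτ.eventuallyEq_of_mem hx_nhds)
  have hτd : DifferentiableOn ℝ τ (Ioo a b) := fun x hx =>
    (hτ_deriv x hx).differentiableAt.differentiableWithinAt
  have hτ_lim : Tendsto τ (𝓝[>] a) (𝓝[>] a) := by
    refine tendsto_nhdsWithin_iff.mpr ⟨?_, ?_⟩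
    · simpa only [hτa, nhdsWithin_Ioo_eq_nhdsGT hab] using
        ((hτc a (left_mem_Icc.mpr hab.le)).mono Ioo_subset_Icc_self).tendsto
    · filter_upwards [Ioo_mem_nhdsGT hab] with x hx using (hτ_maps hx).1
  have hsq : ∀ x ∈ Ioo a b, deriv φ (τ x) ^ 2 ≤ deriv ψ x ^ 2 := fun x hx =>
    hφ.sq_deriv_comp_le_sq_deriv hψ hτd hτ_maps (hφτ.mono Ioo_subset_Icc_self)
      (hφ_lim.comp hτ_lim) hx
  have hψ_ne : ∀ x ∈ Ioo a b, deriv ψ x ≠ 0 := fun x hx =>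
    pow_ne_zero_iff two_ne_zero |>.mp
      ((pow_pos (hφ_pos _ (hτ_maps hx)) 2).trans_le (hsq x hx)).ne'
  have hψ_pos : ∀ x ∈ Ioo a b, 0 < deriv ψ x :=
    deriv_pos_of_deriv_ne_zero_of_lt hab hψc (fun x hx => (hψ x hx).1) hψ_ne <| by
      rw [ha, hb]
      exact hmono (left_mem_Icc.mpr hab.le) (right_mem_Icc.mpr hab.le) hab
  have hτ_id : EqOn τ id (Icc a b) := by
    refine eqOn_id_of_one_le_deriv hτc hτd (fun x hx => ?_) hτa hτb
    rw [(hτ_deriv x hx).deriv, one_le_div (hφ_pos _ (hτ_maps hx))]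
    exact le_of_sq_le_sq (hsq x hx) (hψ_pos x hx).le
  intro x hx
  rw [← hφτ hx, Function.comp_apply, hτ_id hx, id_eq]

/-- The stream function `φ̄₁` of the Poiseuille flow of flux `Q` in the channel `[0, 1]`, the
explicit solution with which any other is compared. -/
def poiseuille (Q t : ℝ) : ℝ := Q * (3 * t ^ 2 - 2 * t ^ 3)

namespace poiseuille

lemma map_zero (Q : ℝ) : poiseuille Q 0 = 0 := by norm_num [poiseuille]

lemma map_one (Q : ℝ) : poiseuille Q 1 = Q := by norm_num [poiseuille]

lemma hasDerivAt (Q t : ℝ) : HasDerivAt (poiseuille Q) (6 * Q * (t * (1 - t))) t := by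
  refine (((((hasDerivAt_id t).pow 2).const_mul 3).sub
    (((hasDerivAt_id t).pow 3).const_mul 2)).const_mul Q).congr_deriv ?_
  simp only [id_eq]
  ring

lemma deriv_eq (Q : ℝ) : deriv (poiseuille Q) = fun t => 6 * Q * (t * (1 - t)) :=
  funext fun t => (hasDerivAt Q t).deriv

lemma deriv_pos {Q t : ℝ} (hQ : 0 < Q) (ht : t ∈ Ioo 0 1) : 0 < deriv (poiseuille Q) t := by
  have h1t : 0 < 1 - t := sub_pos.mpr ht.2
  have h0t : 0 < t := ht.1
  rw [deriv_eq]
  positivity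

lemma tendsto_deriv_zero (Q : ℝ) : Tendsto (deriv (poiseuille Q)) (𝓝 0) (𝓝 0) := by
  rw [deriv_eq]
  exact Continuous.tendsto' (by fun_prop) 0 0 (by ring)

lemma hasDerivAt_deriv (Q t : ℝ) :
    HasDerivAt (deriv (poiseuille Q)) (6 * Q * (1 - 2 * t)) t := by
  rw [deriv_eq]
  refine (((hasDerivAt_id t).mul ((hasDerivAt_id t).const_sub 1)).const_mul (6 * Q)).congr_deriv ?_
  simp only [id_eq]
  ring

lemma isSolutionOn {Q : ℝ} {f : ℝ → ℝ} {s : Set ℝ}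
    (hf : ∀ t ∈ s, f (poiseuille Q t) = 6 * Q * (1 - 2 * t)) :
    IsSolutionOn f (poiseuille Q) s := fun t ht =>
  ⟨(hasDerivAt Q t).differentiableAt, hf t ht ▸ hasDerivAt_deriv Q t⟩

end poiseuille

/-- Uniqueness for the boundary value problem on `(0,1)`: if
`ψ ∈ C²((0,1)) ∩ C¹([0,1])` solves `ψ'' = f(ψ)` on `(0,1)` with `ψ(0) = 0`, `ψ(1) = Q`
and `0 < ψ < Q` on `(0,1)`, then `ψ(x₂) = Q(3x₂² − 2x₂³)` on `[0,1]`. -/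
theorem stmt7
    (Q : ℝ) (hQ : 0 < Q)
    (κ : ℝ → ℝ) (hκ : ∀ t ∈ Set.Icc (0 : ℝ) 1, κ (Q * (3 * t ^ 2 - 2 * t ^ 3)) = t)
    (f : ℝ → ℝ) (hf : ∀ s : ℝ, f s = 6 * Q * (1 - 2 * κ s))
    (ψ : ℝ → ℝ)
    (hC1 : ContDiffOn ℝ 1 ψ (Set.Icc 0 1))
    (hC2 : ContDiffOn ℝ 2 ψ (Set.Ioo 0 1))
    (hode : ∀ x ∈ Set.Ioo (0 : ℝ) 1, deriv (deriv ψ) x = f (ψ x))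
    (h0 : ψ 0 = 0) (h1 : ψ 1 = Q)
    (hb : ∀ x ∈ Set.Ioo (0 : ℝ) 1, 0 < ψ x ∧ ψ x < Q) :
    ∀ x ∈ Set.Icc (0 : ℝ) 1, ψ x = Q * (3 * x ^ 2 - 2 * x ^ 3) := by
  have hφ : IsSolutionOn f (poiseuille Q) (Ioo 0 1) := poiseuille.isSolutionOn fun t ht => by
    rw [hf, poiseuille, hκ t (Ioo_subset_Icc_self ht)]
  exact stmt7_general (φ := poiseuille Q) one_pos
    (fun t _ => (poiseuille.hasDerivAt Q t).continuousAt.continuousWithinAt) hφ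
    (fun _ => poiseuille.deriv_pos hQ)
    ((poiseuille.tendsto_deriv_zero Q).mono_left nhdsWithin_le_nhds)
    hC1.continuousOn (.of_contDiffOn isOpen_Ioo hC2 hode)
    (by rw [h0, poiseuille.map_zero]) (by rw [h1, poiseuille.map_one])
    (by rwa [poiseuille.map_zero, poiseuille.map_one])
end
end
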